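/- Let T > 0, let a : ℝ → ℝ be T-periodic and locally integrable satisfying condition (a*), and for μ > 0 set a_μ(t) = a⁺(t) − μ a⁻(t), where a⁺ and a⁻ are the positive and negative parts of a. Let g ∈ C¹([0,∞)) satisfy (g*) and (gs). Then there exists μ* > 0 such that for every μ > μ* and every integer k ≥ 2, the equation u'' + a_μ(t) g(u) = 0 has a positive subharmonic solution of order k. -/

import Mathlib

open MeasureTheory Set Filter

/-- `u` is a solution of `u'' + F(t,u) = 0`: `u` is of class `C¹` and its derivative `u'`
is locally absolutely continuous (it is the integral of a locally integrable function),
with `u'' + F(t, u(t)) = 0` for a.e. `t`. -/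
def IsSol (F : ℝ → ℝ → ℝ) (u : ℝ → ℝ) : Prop :=
  ∃ u' : ℝ → ℝ,
    (∀ t, HasDerivAt u (u' t) t) ∧
    MeasureTheory.LocallyIntegrable (fun s => F s (u s)) MeasureTheory.volume ∧
    ∀ t, u' t = u' 0 - ∫ s in (0:ℝ)..t, F s (u s)

/-- `q ≻ 0` on `I` : `q ≥ 0` a.e. on `I` and `q ≢ 0` on `I`. -/
def PosOn (q : ℝ → ℝ) (I : Set ℝ) : Prop :=
  (∀ᵐ t ∂(MeasureTheory.volume.restrict I), 0 ≤ q t) ∧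
  ¬ (∀ᵐ t ∂(MeasureTheory.volume.restrict I), q t = 0)

/-- Condition `(q*)`: `[0,T]` splits into `m` closed intervals where `q ≻ 0`
separated by `m` closed intervals where `q ≺ 0`. -/
def SignCond (q : ℝ → ℝ) (T : ℝ) (m : ℕ) : Prop :=
  ∃ σ : ℕ → ℝ, σ 0 = 0 ∧ σ (2*m) = T ∧ (∀ i < 2*m, σ i < σ (i+1)) ∧
    (∀ i < m, PosOn q (Set.Icc (σ (2*i)) (σ (2*i+1)))) ∧
    (∀ i < m, PosOn (fun t => - q t) (Set.Icc (σ (2*i+1)) (σ (2*i+2))))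

/-- A subharmonic solution of order `k`: `kT`-periodic but not `ℓT`-periodic
for `ℓ = 1, …, k-1`. -/
def IsSubharmonic (u : ℝ → ℝ) (T : ℝ) (k : ℕ) : Prop :=
  Function.Periodic u (k * T) ∧ ∀ ℓ : ℕ, 1 ≤ ℓ → ℓ < k → ¬ Function.Periodic u (ℓ * T)

/-- `u` and `v` belong to the same periodicity class. -/
def SameClass (u v : ℝ → ℝ) (T : ℝ) : Prop :=
  ∃ ℓ : ℤ, ∀ t, v t = u (t + ℓ * T)


lemma ivt_lt {φ : ℝ → ℝ} (hφ : Continuous φ) {a b c : ℝ} (hne : ∀ t ∈ uIcc a b, φ t ≠ c)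
    (ha : φ a < c) : φ b < c := by
  by_contra h
  push Not at h
  have := intermediate_value_uIcc (hφ.continuousOn (s := uIcc a b))
  have hc : c ∈ uIcc (φ a) (φ b) := by
    rw [uIcc_of_le (ha.le.trans h)]; exact ⟨ha.le, h⟩
  obtain ⟨t, ht, h2⟩ := this hc
  exact hne t ht h2

lemma ivt_gt {φ : ℝ → ℝ} (hφ : Continuous φ) {a b c : ℝ} (hne : ∀ t ∈ uIcc a b, φ t ≠ c)
    (ha : c < φ a) : c < φ b := by
  have := ivt_lt (φ := fun t => - φ t) hφ.neg (a := a) (b := b) (c := -c)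
    (fun t ht h => hne t ht (by linarith)) (by linarith)
  linarith

lemma miranda_global (F : ℝ × ℝ → ℂ) (hF : Continuous F) (h0 : ∀ z, F z ≠ 0) {xl xr yl yr : ℝ}
    (hb : ∀ x, 0 < (F (x, yl)).re) (ht : ∀ x, (F (x, yr)).re < 0)
    (hl : ∀ y, (F (xl, y)).re = 0 → 0 < (F (xl, y)).im)
    (hr : ∀ y, (F (xr, y)).re = 0 → (F (xr, y)).im < 0) : False := by
  obtain ⟨ℓ, ⟨-, hℓ⟩, -⟩ := Complex.isCoveringMap_exp.existsUnique_continuousMap_lifts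
    (A := ℝ × ℝ) ⟨fun z => (⟨F z, h0 z⟩ : {z : ℂ // z ≠ 0}), by fun_prop⟩ (0, 0)
    (Complex.log (F (0,0))) (by simp [Complex.exp_log (h0 _)])
  have hexp : ∀ z, Complex.exp (ℓ z) = F z := fun z => by
    have := congrFun hℓ z
    simpa [Subtype.ext_iff] using this
  have hre : ∀ z, (F z).re = Real.exp (ℓ z).re * Real.cos (ℓ z).im := fun z => by
    rw [← hexp, Complex.exp_re]
  have him : ∀ z, (F z).im = Real.exp (ℓ z).re * Real.sin (ℓ z).im := fun z => by
    rw [← hexp, Complex.exp_im]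
  have hp := Real.pi_pos
  -- normalize
  obtain ⟨n, hn⟩ : ∃ n : ℤ, (ℓ (xl, yl)).im - n * (2 * Real.pi) ∈ Ioc (-Real.pi) (-Real.pi + 2 * Real.pi) := by
    obtain ⟨n, hn, -⟩ := existsUnique_sub_zsmul_mem_Ioc (show (0:ℝ) < 2 * Real.pi by linarith) (ℓ (xl, yl)).im (-Real.pi)
    exact ⟨n, by simpa using hn⟩
  let θ : ℝ × ℝ → ℝ := fun z => (ℓ z).im - n * (2 * Real.pi)
  have hθc : Continuous θ := by
    have := ℓ.continuous
    simp only [θ]; fun_prop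
  have hcos : ∀ z, Real.cos (θ z) = Real.cos (ℓ z).im := fun z => Real.cos_sub_int_mul_two_pi _ _
  have hsin : ∀ z, Real.sin (θ z) = Real.sin (ℓ z).im := fun z => Real.sin_sub_int_mul_two_pi _ _
  have hre' : ∀ z, (F z).re = Real.exp (ℓ z).re * Real.cos (θ z) := fun z => by rw [hcos, hre]
  have him' : ∀ z, (F z).im = Real.exp (ℓ z).re * Real.sin (θ z) := fun z => by rw [hsin, him]
  have hB : ∀ x, 0 < Real.cos (θ (x, yl)) := fun x => by
    have := hb x; rw [hre'] at this; exact (pos_iff_pos_of_mul_pos this).1 (Real.exp_pos _)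
  have hT : ∀ x, Real.cos (θ (x, yr)) < 0 := fun x => by
    have := ht x; rw [hre'] at this
    by_contra hh; push Not at hh; exact absurd (mul_nonneg (Real.exp_pos _).le hh) (not_le.2 this)
  have hL : ∀ y, Real.cos (θ (xl, y)) = 0 → 0 < Real.sin (θ (xl, y)) := fun y h => by
    have := hl y (by rw [hre', h, mul_zero]); rw [him'] at this
    exact (mul_pos_iff_of_pos_left (Real.exp_pos _)).1 this
  have hR : ∀ y, Real.cos (θ (xr, y)) = 0 → Real.sin (θ (xr, y)) < 0 := fun y h => by
    have := hr y (by rw [hre', h, mul_zero]); rw [him'] at this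
    by_contra hh; push Not at hh; exact absurd (mul_nonneg (Real.exp_pos _).le hh) (not_le.2 this)
  have hn' : θ (xl, yl) ∈ Ioc (-Real.pi) (-Real.pi + 2 * Real.pi) := hn
  have c1 : Real.cos (Real.pi / 2) = 0 := Real.cos_pi_div_two
  have c2 : Real.cos (-(Real.pi / 2)) = 0 := by rw [Real.cos_neg, c1]
  have c3 : Real.cos (3 * Real.pi / 2) = 0 := by
    rw [show 3 * Real.pi / 2 = Real.pi / 2 + Real.pi by ring, Real.cos_add_pi, c1, neg_zero]
  have s1 : Real.sin (Real.pi / 2) = 1 := Real.sin_pi_div_two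
  have s2 : Real.sin (-(Real.pi / 2)) = -1 := by rw [Real.sin_neg, s1]
  have hA1 : θ (xl, yl) < Real.pi / 2 := by
    by_contra h; push Not at h
    have := Real.cos_nonpos_of_pi_div_two_le_of_le h (by linarith [hn'.2])
    linarith [hB xl]
  have hA2 : -(Real.pi / 2) < θ (xl, yl) := by
    by_contra h; push Not at h
    have := Real.cos_nonpos_of_pi_div_two_le_of_le (x := - θ (xl, yl)) (by linarith) (by linarith [hn'.1])
    rw [Real.cos_neg] at this
    linarith [hB xl]
  have hcl : Continuous fun y => θ (xl, y) := by fun_prop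
  have hcr : Continuous fun y => θ (xr, y) := by fun_prop
  have hcb : Continuous fun y => θ (y, yl) := by fun_prop
  have hct : Continuous fun y => θ (y, yr) := by fun_prop
  have hB2 : -(Real.pi / 2) < θ (xl, yr) := ivt_gt hcl (a := yl) (fun y _ h => by
    have h' : θ (xl, y) = _ := h
    have := hL y (by rw [h', c2]); rw [h', s2] at this; linarith) hA2
  have hB1 : Real.pi / 2 < θ (xl, yr) := by
    by_contra h; push Not at h
    have := Real.cos_nonneg_of_neg_pi_div_two_le_of_le (x := θ (xl, yr)) (by linarith) h
    linarith [hT xl]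
  have hE1 : Real.pi / 2 < θ (xr, yr) := ivt_gt hct (a := xl) (fun x _ h => by
    have h' : θ (x, yr) = _ := h
    have := hT x; rw [h', c1] at this; linarith) hB1
  have hD1 : θ (xr, yl) < Real.pi / 2 := ivt_lt hcb (a := xl) (fun x _ h => by
    have h' : θ (x, yl) = _ := h
    have := hB x; rw [h', c1] at this; linarith) hA1
  have hE2 : θ (xr, yr) < Real.pi / 2 := ivt_lt hcr (a := yl) (fun y _ h => by
    have h' : θ (xr, y) = _ := h
    have := hR y (by rw [h', c1]); rw [h', s1] at this; linarith) hD1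
  linarith

lemma miranda (F1 F2 : ℝ × ℝ → ℝ) (hF1 : Continuous F1) (hF2 : Continuous F2) {xl xr yl yr : ℝ}
    (hx : xl ≤ xr) (hy : yl ≤ yr)
    (hb : ∀ x ∈ Icc xl xr, 0 < F1 (x, yl)) (ht : ∀ x ∈ Icc xl xr, F1 (x, yr) < 0)
    (hl : ∀ y ∈ Icc yl yr, F1 (xl, y) = 0 → 0 < F2 (xl, y))
    (hr : ∀ y ∈ Icc yl yr, F1 (xr, y) = 0 → F2 (xr, y) < 0) :
    ∃ x ∈ Icc xl xr, ∃ y ∈ Icc yl yr, F1 (x, y) = 0 ∧ F2 (x, y) = 0 := by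
  by_contra hcon
  push Not at hcon
  let c : ℝ × ℝ → ℝ × ℝ := fun z => ((projIcc xl xr hx z.1 : ℝ), (projIcc yl yr hy z.2 : ℝ))
  have hc : Continuous c := by
    have h1 : Continuous (projIcc xl xr hx) := continuous_projIcc
    have h2 : Continuous (projIcc yl yr hy) := continuous_projIcc
    simp only [c]; fun_prop
  refine miranda_global (fun z => (F1 (c z) : ℂ) + (F2 (c z) : ℂ) * Complex.I)
    (by fun_prop) ?_ (xl := xl) (xr := xr) (yl := yl) (yr := yr) ?_ ?_ ?_ ?_
  · intro z h
    have h1 := congrArg Complex.re h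
    have h2 := congrArg Complex.im h
    simp at h1 h2
    exact hcon _ (projIcc xl xr hx z.1).2 _ (projIcc yl yr hy z.2).2 h1 h2
  · intro x; simpa [c] using hb _ (projIcc xl xr hx x).2
  · intro x; simpa [c] using ht _ (projIcc xl xr hx x).2
  · intro x; simpa [c] using hl _ (projIcc yl yr hy x).2
  · intro x; simpa [c] using hr _ (projIcc yl yr hy x).2


lemma ivp_family (K : ℝ) (hK : 0 < K) (f : ℝ → ℝ → ℝ) (L : ℝ → ℝ)
    (hL0 : ∀ t, 0 ≤ L t) (hLi : ∀ a b, IntervalIntegrable L volume a b)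
    (hlip : ∀ t s s', |f t s - f t s'| ≤ L t * |s - s'|)
    (hfi : ∀ u : ℝ → ℝ, Continuous u → ∀ a b, IntervalIntegrable (fun t => f t (u t)) volume a b) :
    ∃ u v : ℝ × ℝ → ℝ → ℝ,
      (∀ z, u z 0 = z.1) ∧ (∀ z t, HasDerivAt (u z) (v z t) t) ∧
      (∀ z, ∀ t ∈ Icc 0 K, v z t = z.2 - ∫ s in (0:ℝ)..t, f s (u z s)) ∧
      (Continuous fun z => u z K) ∧ (Continuous fun z => v z K) := by
  set Λ : ℝ := ∫ s in (0:ℝ)..K, L s with hΛ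
  have hΛ0 : 0 ≤ Λ := intervalIntegral.integral_nonneg hK.le fun t _ => hL0 t
  set κ : ℝ := 2 * Λ + 1 with hκ
  have hκ0 : 0 < κ := by positivity
  let X := C(Icc (0:ℝ) K, ℝ)
  let U : X → ℝ → ℝ := fun w t => Real.exp (κ * t) * IccExtend hK.le w t
  have hUc : ∀ w, Continuous (U w) := fun w => by
    have : Continuous (IccExtend hK.le w) := w.continuous.Icc_extend'
    simp only [U]; fun_prop
  let V : ℝ × ℝ → X → ℝ → ℝ := fun z w t => z.2 - ∫ s in (0:ℝ)..t, f s (U w s)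
  have hVc : ∀ z w, Continuous (V z w) := fun z w =>
    continuous_const.sub (intervalIntegral.continuous_primitive (hfi _ (hUc w)) 0)
  let W : ℝ × ℝ → X → ℝ → ℝ := fun z w t => z.1 + ∫ s in (0:ℝ)..t, V z w s
  have hWd : ∀ z w t, HasDerivAt (W z w) (V z w t) t := fun z w t =>
    ((hVc z w).integral_hasStrictDerivAt 0 t).hasDerivAt.const_add _
  have hWc : ∀ z w, Continuous (W z w) := fun z w =>
    continuous_iff_continuousAt.2 fun t => (hWd z w t).continuousAt
  let Φ : ℝ × ℝ → X → X := fun z w => ⟨fun t => Real.exp (-(κ * t)) * W z w t, by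
    have := hWc z w
    fun_prop⟩
  have hUd : ∀ w w' : X, ∀ s, |U w s - U w' s| ≤ Real.exp (κ * s) * dist w w' := by
    intro w w' s
    simp only [U]
    rw [← mul_sub, abs_mul, abs_of_pos (Real.exp_pos _)]
    gcongr
    rw [← Real.dist_eq]
    exact ContinuousMap.dist_apply_le_dist _
  have hVd : ∀ z (w w' : X), ∀ t ∈ Icc (0:ℝ) K,
      |V z w t - V z w' t| ≤ Λ * (Real.exp (κ * t) * dist w w') := by
    intro z w w' t ht
    have e : V z w t - V z w' t = -∫ s in (0:ℝ)..t, (f s (U w s) - f s (U w' s)) := by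
      simp only [V]
      rw [intervalIntegral.integral_sub (hfi _ (hUc w) _ _) (hfi _ (hUc w') _ _)]; ring
    rw [e, abs_neg]
    calc |∫ s in (0:ℝ)..t, (f s (U w s) - f s (U w' s))|
        ≤ ∫ s in (0:ℝ)..t, |f s (U w s) - f s (U w' s)| :=
          intervalIntegral.abs_integral_le_integral_abs ht.1
      _ ≤ ∫ s in (0:ℝ)..t, L s * (Real.exp (κ * t) * dist w w') := by
          apply intervalIntegral.integral_mono_on ht.1
            (((hfi _ (hUc w) _ _).sub (hfi _ (hUc w') _ _)).abs) ((hLi _ _).mul_const _)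
          intro s hs
          refine (hlip _ _ _).trans ?_
          refine mul_le_mul_of_nonneg_left ?_ (hL0 s)
          refine (hUd w w' s).trans ?_
          gcongr
          exact hs.2
      _ = (∫ s in (0:ℝ)..t, L s) * (Real.exp (κ * t) * dist w w') := by
          rw [intervalIntegral.integral_mul_const]
      _ ≤ Λ * (Real.exp (κ * t) * dist w w') := by
          gcongr
          exact intervalIntegral.integral_mono_interval le_rfl ht.1 ht.2
            (Eventually.of_forall hL0) (hLi _ _)
  have hcontr : ∀ z w w', dist (Φ z w) (Φ z w') ≤ (1/2) * dist w w' := by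
    intro z w w'
    rw [ContinuousMap.dist_le (by positivity)]
    intro t
    have ht := t.2
    have e : W z w t - W z w' t = ∫ s in (0:ℝ)..t, (V z w s - V z w' s) := by
      simp only [W]
      rw [intervalIntegral.integral_sub ((hVc _ _).intervalIntegrable _ _)
        ((hVc _ _).intervalIntegrable _ _)]; ring
    have hint : ∫ s in (0:ℝ)..t, Real.exp (κ * s) = (Real.exp (κ * t) - 1) / κ := by
      rw [intervalIntegral.integral_comp_mul_left (fun x => Real.exp x) hκ0.ne']
      simp [div_eq_inv_mul]
    have hW : |W z w t - W z w' t| ≤ (1/2) * dist w w' * Real.exp (κ * t) := by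
      rw [e]
      calc _ ≤ ∫ s in (0:ℝ)..t, |V z w s - V z w' s| :=
            intervalIntegral.abs_integral_le_integral_abs ht.1
        _ ≤ ∫ s in (0:ℝ)..t, Λ * (Real.exp (κ * s) * dist w w') := by
            apply intervalIntegral.integral_mono_on ht.1
            · exact ((hVc _ _).sub (hVc _ _)).abs.intervalIntegrable _ _
            · apply Continuous.intervalIntegrable; fun_prop
            · intro s hs; exact hVd z w w' s ⟨hs.1, hs.2.trans ht.2⟩
        _ = Λ * ((Real.exp (κ * t) - 1) / κ * dist w w') := by
            rw [intervalIntegral.integral_const_mul, intervalIntegral.integral_mul_const, hint]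
        _ = (Λ / κ) * ((Real.exp (κ * t) - 1) * dist w w') := by ring
        _ ≤ (1/2) * ((Real.exp (κ * t)) * dist w w') := by
            have h1 : Λ / κ ≤ 1 / 2 := by rw [div_le_div_iff₀ hκ0 two_pos]; linarith
            have h2 : 0 ≤ Real.exp (κ * t) - 1 := by
              have := Real.one_le_exp (mul_nonneg hκ0.le ht.1); linarith
            gcongr
            linarith
        _ = _ := by ring
    simp only [Φ, ContinuousMap.coe_mk]
    rw [Real.dist_eq, ← mul_sub, abs_mul, abs_of_pos (Real.exp_pos _)]
    calc _ ≤ Real.exp (-(κ * t)) * ((1/2) * dist w w' * Real.exp (κ * t)) := by gcongr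
      _ = (1/2) * dist w w' * (Real.exp (-(κ * t)) * Real.exp (κ * t)) := by ring
      _ = _ := by rw [← Real.exp_add]; simp
  have hpar : ∀ z z' w, dist (Φ z w) (Φ z' w) ≤ (1 + K) * dist z z' := by
    intro z z' w
    rw [ContinuousMap.dist_le (by positivity)]
    intro t
    have ht := t.2
    have e : W z w t - W z' w t = (z.1 - z'.1) + t * (z.2 - z'.2) := by
      have : ∫ s in (0:ℝ)..t, (V z w s - V z' w s) = t * (z.2 - z'.2) := by
        simp [V]; ring
      simp only [W]
      rw [intervalIntegral.integral_sub ((hVc _ _).intervalIntegrable _ _)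
        ((hVc _ _).intervalIntegrable _ _)] at this
      linarith
    have h1 : |z.1 - z'.1| ≤ dist z z' := by rw [← Real.dist_eq]; exact le_max_left _ _
    have h2 : |z.2 - z'.2| ≤ dist z z' := by rw [← Real.dist_eq]; exact le_max_right _ _
    simp only [Φ, ContinuousMap.coe_mk]
    rw [Real.dist_eq, ← mul_sub, abs_mul, abs_of_pos (Real.exp_pos _), e]
    have h3 : Real.exp (-(κ * t)) ≤ 1 := by
      rw [Real.exp_le_one_iff]; have := mul_nonneg hκ0.le ht.1; linarith
    calc _ ≤ 1 * |z.1 - z'.1 + t * (z.2 - z'.2)| := by gcongr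
      _ ≤ |z.1 - z'.1| + |t * (z.2 - z'.2)| := by rw [one_mul]; exact abs_add_le _ _
      _ ≤ dist z z' + K * dist z z' := by
          rw [abs_mul, abs_of_nonneg ht.1]
          gcongr
          exact ht.2
      _ = _ := by ring
  have hCW : ∀ z, ContractingWith (1/2) (Φ z) := fun z =>
    ⟨by rw [← NNReal.coe_lt_coe]; norm_num, LipschitzWith.of_dist_le_mul fun w w' => by
      simpa using hcontr z w w'⟩
  let w : ℝ × ℝ → X := fun z => ContractingWith.fixedPoint (Φ z) (hCW z)
  have hw : ∀ z, Φ z (w z) = w z := fun z => (hCW z).fixedPoint_isFixedPt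
  have hwd : ∀ z z', dist (w z) (w z') ≤ 2 * (1 + K) * dist z z' := by
    intro z z'
    have h1 := dist_triangle (Φ z (w z)) (Φ z (w z')) (Φ z' (w z'))
    have h2 := hcontr z (w z) (w z')
    have h3 := hpar z z' (w z')
    rw [hw z, hw z'] at h1
    rw [hw z] at h2
    rw [hw z'] at h3
    linarith
  have hwc : Continuous w := by
    have : LipschitzWith (Real.toNNReal (2 * (1 + K))) w := LipschitzWith.of_dist_le_mul fun z z' => by
      rw [Real.coe_toNNReal _ (by positivity)]; exact hwd z z'
    exact this.continuous
  have hUW : ∀ z, ∀ t ∈ Icc (0:ℝ) K, U (w z) t = W z (w z) t := by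
    intro z t ht
    have : Real.exp (-(κ * t)) * W z (w z) t = w z ⟨t, ht⟩ :=
      congrArg (fun q : X => q ⟨t, ht⟩) (hw z)
    simp only [U]
    rw [IccExtend_of_mem _ _ ht, ← this, ← mul_assoc, ← Real.exp_add]
    simp
  refine ⟨fun z => W z (w z), fun z => V z (w z), ?_, ?_, ?_, ?_, ?_⟩
  · intro z; simp [W]
  · intro z t; exact hWd z _ t
  · intro z t ht
    simp only [V]
    congr 1
    apply intervalIntegral.integral_congr
    intro s hs
    rw [uIcc_of_le ht.1] at hs
    simp only
    rw [hUW z s ⟨hs.1, hs.2.trans ht.2⟩]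
  · have : (fun z => W z (w z) K) = fun z => Real.exp (κ * K) * (w z ⟨K, hK.le, le_rfl⟩) := by
      funext z
      rw [← hUW z K ⟨hK.le, le_rfl⟩]
      simp only [U]
      rw [IccExtend_of_mem _ _ ⟨hK.le, le_rfl⟩]
    rw [this]
    exact continuous_const.mul ((continuous_eval_const (⟨K, hK.le, le_rfl⟩ : Icc (0:ℝ) K)).comp hwc)
  · rw [Metric.continuous_iff']
    intro z ε hε
    have hz : Continuous fun z' : ℝ × ℝ => |z'.2 - z.2| + Λ * (Real.exp (κ * K) * dist (w z') (w z)) := by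
      fun_prop
    have := hz.tendsto z
    simp only [sub_self, abs_zero, dist_self, mul_zero, add_zero] at this
    filter_upwards [this.eventually (gt_mem_nhds hε)] with z' hz'
    refine lt_of_le_of_lt ?_ hz'
    rw [Real.dist_eq]
    have e : V z' (w z') K - V z (w z) K = (z'.2 - z.2) + (V z (w z') K - V z (w z) K) := by
      simp only [V]; ring
    rw [e]
    refine (abs_add_le _ _).trans ?_
    gcongr
    exact hVd z _ _ K ⟨hK.le, le_rfl⟩


lemma right_gt {w : ℝ → ℝ} {c q : ℝ} (hd : HasDerivAt w c q) (hc : 0 < c) :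
    ∃ ε > 0, ∀ t, q < t → t < q + ε → w q < w t := by
  have h := (hasDerivAt_iff_tendsto_slope.1 hd).eventually (lt_mem_nhds hc)
  have h2 : ∀ᶠ t in nhdsWithin q (Ioi q), 0 < slope w q t :=
    h.filter_mono (nhdsWithin_mono _ fun t ht => ne_of_gt ht)
  obtain ⟨b, hb, h3⟩ := (mem_nhdsGT_iff_exists_Ioo_subset).1 h2
  refine ⟨b - q, sub_pos.2 hb, fun t h1 h2 => ?_⟩
  have h4 : 0 < slope w q t := h3 ⟨h1, by linarith⟩
  rw [slope_def_field] at h4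
  have := (div_pos_iff_of_pos_right (sub_pos.2 h1)).1 h4
  linarith

lemma mp_nonneg {w w' : ℝ → ℝ} (hd : ∀ t, HasDerivAt w (w' t) t) {s e : ℝ}
    (h0 : 0 ≤ w s) (h1 : 0 < w' s)
    (hmono : ∀ p q, s ≤ p → p ≤ q → q ≤ e → (∀ t ∈ Icc p q, 0 ≤ w t) → w' p ≤ w' q) :
    ∀ t ∈ Icc s e, 0 ≤ w t := by
  have hc : Continuous w := continuous_iff_continuousAt.2 fun t => (hd t).continuousAt
  intro t1 ht1
  by_contra hneg
  push Not at hneg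
  let S : Set ℝ := {t | t ∈ Icc s e ∧ w t < 0}
  have hSne : S.Nonempty := ⟨t1, ht1, hneg⟩
  have hSb : BddBelow S := ⟨s, fun t ht => ht.1.1⟩
  set q := sInf S
  have hsq : s ≤ q := le_csInf hSne fun t ht => ht.1.1
  have hqt : q ≤ t1 := csInf_le hSb ⟨ht1, hneg⟩
  have hlt : ∀ t, s ≤ t → t < q → 0 ≤ w t := by
    intro t h1 h2
    by_contra h3
    push Not at h3
    exact absurd (csInf_le hSb ⟨⟨h1, by linarith [ht1.2]⟩, h3⟩) (not_le.2 h2)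
  have hq : 0 ≤ w q := by
    rcases hsq.eq_or_lt with h | h
    · rwa [← h]
    · by_contra h3
      push Not at h3
      have := (hc.tendsto q).eventually (gt_mem_nhds h3)
      obtain ⟨ε, hε, hb⟩ := Metric.eventually_nhds_iff.1 this
      have hm : max s (q - ε / 2) < q := max_lt h (by linarith)
      have h4 := hlt (max s (q - ε/2)) (le_max_left _ _) hm
      have h5 := hb (y := max s (q - ε/2)) (by
        rw [Real.dist_eq, abs_lt]; constructor <;> linarith [le_max_right s (q - ε/2)])
      linarith
  have hw'q : 0 < w' q := lt_of_lt_of_le h1 (hmono s q le_rfl hsq (by linarith [ht1.2]) (by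
    intro t ht
    rcases ht.2.eq_or_lt with h | h
    · rwa [h]
    · exact hlt t ht.1 h))
  obtain ⟨ε, hε, hr⟩ := right_gt (hd q) hw'q
  obtain ⟨t, htS, ht⟩ := exists_lt_of_csInf_lt hSne (show sInf S < q + ε by linarith)
  have hqt' : q ≤ t := csInf_le hSb htS
  rcases hqt'.eq_or_lt with h | h
  · rw [← h] at htS; linarith [htS.2]
  · linarith [hr t h ht, htS.2]

lemma mvt_ge {w w' : ℝ → ℝ} (hd : ∀ t, HasDerivAt w (w' t) t) {s e c : ℝ} (hse : s ≤ e)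
    (h : ∀ t ∈ Icc s e, c ≤ w' t) : c * (e - s) ≤ w e - w s := by
  rcases hse.eq_or_lt with h' | h'
  · simp [h']
  obtain ⟨t, ht, h2⟩ := exists_hasDerivAt_eq_slope w w' h'
    (fun t _ => (hd t).continuousAt.continuousWithinAt) (fun t _ => hd t)
  have := h t ⟨ht.1.le, ht.2.le⟩
  rw [h2, le_div_iff₀ (sub_pos.2 h')] at this
  exact this

lemma mvt_le {w w' : ℝ → ℝ} (hd : ∀ t, HasDerivAt w (w' t) t) {s e c : ℝ} (hse : s ≤ e)
    (h : ∀ t ∈ Icc s e, w' t ≤ c) : w e - w s ≤ c * (e - s) := by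
  have := mvt_ge (w := fun t => - w t) (w' := fun t => - w' t) (fun t => (hd t).neg) (c := -c) hse
    (fun t ht => neg_le_neg (h t ht))
  linarith

lemma mp_forward {w w' : ℝ → ℝ} (hd : ∀ t, HasDerivAt w (w' t) t) {s e : ℝ} (hse : s ≤ e)
    (h0 : 0 ≤ w s) (h1 : 0 < w' s)
    (hmono : ∀ p q, s ≤ p → p ≤ q → q ≤ e → (∀ t ∈ Icc p q, 0 ≤ w t) → w' p ≤ w' q) :
    w' s ≤ w' e ∧ w' s * (e - s) ≤ w e - w s := by
  have hn := mp_nonneg hd h0 h1 hmono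
  have hm : ∀ t ∈ Icc s e, w' s ≤ w' t := fun t ht =>
    hmono s t le_rfl ht.1 ht.2 fun x hx => hn x ⟨hx.1, hx.2.trans ht.2⟩
  exact ⟨hm e ⟨hse, le_rfl⟩, mvt_ge hd hse hm⟩

lemma mp_out {w w' : ℝ → ℝ} (hd : ∀ t, HasDerivAt w (w' t) t) {s e : ℝ}
    (h0 : w s ≤ 0) (he : w e ≤ 0)
    (hmono : ∀ p q, s ≤ p → p ≤ q → q ≤ e → (∀ t ∈ Icc p q, 0 ≤ w t) → w' p ≤ w' q) :
    ∀ t ∈ Icc s e, w t ≤ 0 := by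
  have hc : Continuous w := continuous_iff_continuousAt.2 fun t => (hd t).continuousAt
  intro t ht
  by_contra hpos
  push Not at hpos
  let S : Set ℝ := Icc s t ∩ {x | w x ≤ 0}
  have hScl : IsCompact S := isCompact_Icc.inter_right (isClosed_le hc continuous_const)
  have hSne : S.Nonempty := ⟨s, ⟨le_rfl, ht.1⟩, h0⟩
  have hq := hScl.sSup_mem hSne
  set q := sSup S
  have hqt : q < t := lt_of_le_of_ne hq.1.2 fun h => by
    have := hq.2; rw [h] at this; exact absurd (show w t ≤ 0 from this) (not_le.2 hpos)
  obtain ⟨p, hp, h2⟩ := exists_hasDerivAt_eq_slope w w' hqt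
    (fun t _ => (hd t).continuousAt.continuousWithinAt) (fun t _ => hd t)
  have hwq : w q ≤ 0 := hq.2
  have hp' : 0 < w' p := by rw [h2]; exact div_pos (by linarith) (by linarith)
  have hwp : 0 < w p := by
    by_contra h
    push Not at h
    have : p ≤ q := le_csSup hScl.bddAbove ⟨⟨by linarith [hq.1.1, hp.1], hp.2.le⟩, h⟩
    linarith [hp.1]
  have hsp : s ≤ p := by linarith [hq.1.1, hp.1]
  have := (mp_forward hd (s := p) (e := e) (by linarith [hp.2, ht.2]) hwp.le hp'
    (fun a b h1 => hmono a b (hsp.trans h1))).2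
  have h3 : 0 ≤ w' p * (e - p) := mul_nonneg hp'.le (by linarith [hp.2, ht.2])
  linarith

/-- nonnegativity -/
lemma sol_nonneg {u v F : ℝ → ℝ} (hd : ∀ t, HasDerivAt u (v t) t) {K : ℝ}
    (hv : ∀ a b, 0 ≤ a → a ≤ b → b ≤ K → v b - v a = -∫ s in a..b, F s)
    (hF : ∀ t ∈ Icc 0 K, u t ≤ 0 → 0 ≤ F t) (h0 : 0 ≤ u 0) (hK : 0 ≤ u K) :
    ∀ t ∈ Icc 0 K, 0 ≤ u t := by
  intro t ht
  have := mp_out (w := fun t => - u t) (w' := fun t => - v t) (fun t => (hd t).neg) (s := 0) (e := K)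
    (by simpa using h0) (by simpa using hK) (by
      intro p q h1 h2 h3 h4
      have e := hv p q h1 h2 h3
      have : 0 ≤ ∫ s in p..q, F s := intervalIntegral.integral_nonneg h2 fun x hx =>
        hF x ⟨h1.trans hx.1, hx.2.trans h3⟩ (by simpa using h4 x hx)
      linarith) t ht
  simpa using this

lemma tangent {u v : ℝ → ℝ} (hd : ∀ t, HasDerivAt u (v t) t) {s e : ℝ}
    (hanti : AntitoneOn v (Icc s e)) {a b : ℝ} (ha : s ≤ a) (hab : a ≤ b) (hb : b ≤ e) :
    v b * (b - a) ≤ u b - u a ∧ u b - u a ≤ v a * (b - a) :=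
  ⟨mvt_ge hd hab fun t ht => hanti ⟨ha.trans ht.1, ht.2.trans hb⟩ ⟨ha.trans hab, hb⟩ ht.2,
   mvt_le hd hab fun t ht => hanti ⟨ha, hab.trans hb⟩ ⟨ha.trans ht.1, ht.2.trans hb⟩ ht.1⟩

lemma apriori {u v F p h : ℝ → ℝ} (hd : ∀ t, HasDerivAt u (v t) t) {σ : ℝ} (hσ : 0 < σ)
    (hFi : ∀ a b, IntervalIntegrable F volume a b)
    (hpi : ∀ a b, IntervalIntegrable p volume a b) (hp0 : ∀ t, 0 ≤ p t)
    (hv : ∀ a b, 0 ≤ a → a ≤ b → b ≤ σ → v b - v a = -∫ s in a..b, F s)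
    (hu0 : ∀ t ∈ Icc 0 σ, 0 ≤ u t)
    (hF : ∀ t ∈ Icc 0 σ, F t = p t * h (u t)) (hh0 : ∀ s, 0 ≤ s → 0 ≤ h s)
    {M sM ε R0 H : ℝ} (hM : 0 < M) (hsM : 0 < sM) (hhM : ∀ s, sM ≤ s → M * s ≤ h s) (hε : 0 < ε)
    (hεσ : ε ≤ σ - ε) (hA : 2 * σ < M * (∫ t in ε..(σ - ε), p t) * ε ^ 2)
    (hR0 : R0 = sM * σ / ε) (hH : ∀ s ∈ Icc 0 R0, h s ≤ H) :
    (∀ t ∈ Icc 0 σ, u t ≤ R0) ∧ v 0 ≤ R0 / σ + H * (∫ t in 0..σ, p t) ∧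
      -(R0 / σ + H * (∫ t in 0..σ, p t)) ≤ v σ := by
  have hc : Continuous u := continuous_iff_continuousAt.2 fun t => (hd t).continuousAt
  have hF0 : ∀ t ∈ Icc 0 σ, 0 ≤ F t := fun t ht => by
    rw [hF t ht]; exact mul_nonneg (hp0 t) (hh0 _ (hu0 t ht))
  have hanti : AntitoneOn v (Icc 0 σ) := by
    intro a ha b hb hab
    have := hv a b ha.1 hab hb.2
    have h2 : 0 ≤ ∫ s in a..b, F s := intervalIntegral.integral_nonneg hab fun x hx =>
      hF0 x ⟨ha.1.trans hx.1, hx.2.trans hb.2⟩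
    linarith
  have hbd : ∀ t ∈ Icc 0 σ, u t ≤ R0 := by
    obtain ⟨tm, htm, hmax⟩ := isCompact_Icc.exists_isMaxOn (nonempty_Icc.2 hσ.le) (hc.continuousOn (s := Icc 0 σ))
    have hmax' : ∀ t ∈ Icc 0 σ, u t ≤ u tm := fun t ht => hmax ht
    intro t ht
    refine (hmax' t ht).trans ?_
    by_contra hcon
    push Not at hcon
    set ρ := u tm with hρ
    have hR0pos : 0 < R0 := by rw [hR0]; positivity
    have hρ0 : 0 < ρ := hR0pos.trans hcon
    have hρsM : sM ≤ ρ * ε / σ := by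
      rw [le_div_iff₀ hσ]; rw [hR0, div_lt_iff₀ hε] at hcon; exact hcon.le
    have hlow : ∀ t ∈ Icc ε (σ - ε), ρ * ε / σ ≤ u t := by
      intro t ht
      have ht0 : 0 < t := lt_of_lt_of_le hε ht.1
      have htσ : t < σ := by linarith [ht.2]
      rw [div_le_iff₀ hσ]
      have hut := hu0 t ⟨ht0.le, htσ.le⟩
      rcases le_total t tm with h1 | h1
      · have t1 := (tangent hd hanti le_rfl ht0.le htσ.le).1
        have t2 := (tangent hd hanti ht0.le h1 htm.2).2
        have u0 := hu0 0 ⟨le_rfl, hσ.le⟩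
        have k1 : v t * (t - 0) * (tm - t) ≤ u t * (tm - t) := by
          apply mul_le_mul_of_nonneg_right _ (by linarith); linarith
        have k2 : t * (ρ - u t) ≤ t * (v t * (tm - t)) :=
          mul_le_mul_of_nonneg_left t2 ht0.le
        have k3 : t * ρ ≤ u t * tm := by nlinarith
        have k4 : ρ * ε ≤ ρ * t := mul_le_mul_of_nonneg_left ht.1 hρ0.le
        have k5 : u t * tm ≤ u t * σ := mul_le_mul_of_nonneg_left htm.2 hut
        linarith
      · have t1 := (tangent hd hanti ht0.le htσ.le le_rfl).2
        have t2 := (tangent hd hanti htm.1 h1 htσ.le).1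
        have u0 := hu0 σ ⟨hσ.le, le_rfl⟩
        have k1 : -v t * (σ - t) * (t - tm) ≤ u t * (t - tm) := by
          apply mul_le_mul_of_nonneg_right _ (by linarith); linarith
        have k2 : (σ - t) * (v t * (t - tm)) ≤ (σ - t) * (u t - ρ) :=
          mul_le_mul_of_nonneg_left t2 (by linarith)
        have k3 : (σ - t) * ρ ≤ u t * (σ - tm) := by nlinarith
        have k4 : ρ * ε ≤ ρ * (σ - t) := mul_le_mul_of_nonneg_left (by linarith [ht.2]) hρ0.le
        have k5 : u t * (σ - tm) ≤ u t * σ := mul_le_mul_of_nonneg_left (by linarith [htm.1]) hut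
        linarith
    have hε1 : v ε * (ε - 0) ≤ ρ := by
      have := (tangent hd hanti le_rfl hε.le (by linarith)).1
      have h1 := hmax' ε ⟨hε.le, by linarith⟩
      have h2 := hu0 0 ⟨le_rfl, hσ.le⟩
      linarith
    have hε2 : -ρ ≤ v (σ - ε) * (σ - (σ - ε)) := by
      have := (tangent hd hanti (a := σ - ε) (b := σ) (by linarith) (by linarith) le_rfl).2
      have h1 := hmax' (σ - ε) ⟨by linarith, by linarith⟩
      have h2 := hu0 σ ⟨hσ.le, le_rfl⟩
      linarith
    have hint : M * (ρ * ε / σ) * (∫ t in ε..(σ - ε), p t) ≤ ∫ t in ε..(σ - ε), F t := by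
      rw [← intervalIntegral.integral_const_mul]
      apply intervalIntegral.integral_mono_on hεσ ((hpi _ _).const_mul _) (hFi _ _)
      intro t ht
      rw [hF t ⟨by linarith [ht.1], by linarith [ht.2]⟩, mul_comm]
      refine mul_le_mul_of_nonneg_left ?_ (hp0 t)
      refine le_trans ?_ (hhM _ (hρsM.trans (hlow t ht)))
      exact mul_le_mul_of_nonneg_left (hlow t ht) hM.le
    have hvv := hv ε (σ - ε) hε.le hεσ (by linarith)
    set A := ∫ t in ε..(σ - ε), p t
    have e1 : M * (ρ * ε / σ) * A * ε ≤ 2 * ρ := by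
      have : M * (ρ * ε / σ) * A * ε ≤ (v ε - v (σ - ε)) * ε :=
        mul_le_mul_of_nonneg_right (by linarith) hε.le
      nlinarith
    have e2 : M * (ρ * ε / σ) * A * ε = ρ * (M * A * ε ^ 2) / σ := by ring
    rw [e2, div_le_iff₀ hσ] at e1
    nlinarith
  have hH' : ∫ t in 0..σ, F t ≤ H * ∫ t in 0..σ, p t := by
    rw [← intervalIntegral.integral_const_mul]
    apply intervalIntegral.integral_mono_on hσ.le (hFi _ _) ((hpi _ _).const_mul _)
    intro t ht
    rw [hF t ht, mul_comm]
    exact mul_le_mul_of_nonneg_right (hH _ ⟨hu0 t ht, hbd t ht⟩) (hp0 t)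
  have htan := tangent hd hanti le_rfl hσ.le le_rfl
  have hvv := hv 0 σ le_rfl hσ.le le_rfl
  have b1 := hbd 0 ⟨le_rfl, hσ.le⟩
  have b2 := hbd σ ⟨hσ.le, le_rfl⟩
  have b3 := hu0 0 ⟨le_rfl, hσ.le⟩
  have b4 := hu0 σ ⟨hσ.le, le_rfl⟩
  have c1 : v σ ≤ R0 / σ := by rw [le_div_iff₀ hσ]; linarith [htan.1]
  have c2 : -(R0 / σ) ≤ v 0 := by rw [← neg_div, div_le_iff₀ hσ]; linarith [htan.2]
  exact ⟨hbd, by linarith, by linarith⟩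

/-- convexity of `u - β` where it is nonnegative -/
lemma conv_mono {u v F β β' p n : ℝ → ℝ} {s e Γ lam : ℝ}
    (hFi : ∀ a b, IntervalIntegrable F volume a b)
    (hpi : ∀ a b, IntervalIntegrable p volume a b)
    (hni : ∀ a b, IntervalIntegrable n volume a b)
    (hv : ∀ a b, s ≤ a → a ≤ b → b ≤ e → v b - v a = -∫ t in a..b, F t)
    (hβ' : ∀ a b, s ≤ a → a ≤ b → b ≤ e → β' b - β' a = -∫ t in a..b, (Γ * p t - lam * n t))
    (hF3 : ∀ t ∈ Ioo s e, β t ≤ u t → F t ≤ Γ * p t - lam * n t) :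
    ∀ a b, s ≤ a → a ≤ b → b ≤ e → (∀ t ∈ Icc a b, 0 ≤ u t - β t) →
      v a - β' a ≤ v b - β' b := by
  intro a b h1 h2 h3 h4
  have e1 := hv a b h1 h2 h3
  have e2 := hβ' a b h1 h2 h3
  have : ∫ t in a..b, F t ≤ ∫ t in a..b, (Γ * p t - lam * n t) := by
    apply intervalIntegral.integral_mono_on_of_le_Ioo h2 (hFi _ _)
      (((hpi _ _).const_mul _).sub ((hni _ _).const_mul _))
    intro t ht
    exact hF3 t ⟨by linarith [ht.1], by linarith [ht.2]⟩ (by linarith [h4 t ⟨ht.1.le, ht.2.le⟩])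
  linarith

lemma exit_lemma {u v F β β' p n : ℝ → ℝ} {s e Γ lam η κ r δ C C2 Q B : ℝ}
    (hd : ∀ t, HasDerivAt u (v t) t) (hdβ : ∀ t, HasDerivAt β (β' t) t)
    (hFi : ∀ a b, IntervalIntegrable F volume a b)
    (hpi : ∀ a b, IntervalIntegrable p volume a b)
    (hni : ∀ a b, IntervalIntegrable n volume a b)
    (hp0 : ∀ t, 0 ≤ p t) (hn0 : ∀ t, 0 ≤ n t)
    (hΓ : 0 ≤ Γ) (hη : 0 ≤ η) (hκ : 0 ≤ κ) (hr : 0 < r)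
    (hδ : 0 < δ) (hse : s + δ ≤ e)
    (hv : ∀ a b, s ≤ a → a ≤ b → b ≤ e → v b - v a = -∫ t in a..b, F t)
    (hβ' : ∀ a b, s ≤ a → a ≤ b → b ≤ e → β' b - β' a = -∫ t in a..b, (Γ * p t - lam * n t))
    (hF1 : ∀ t ∈ Ioo s e, F t ≤ Γ * p t + η)
    (hF2 : ∀ t ∈ Ioo s e, r / 4 ≤ u t → F t ≤ Γ * p t + η - κ * n t)
    (hF3 : ∀ t ∈ Ioo s e, β t ≤ u t → F t ≤ Γ * p t - lam * n t)
    (hβr : ∀ t, β t ≤ r) (hβB : ∀ t, β' t ≤ B) (hβB' : ∀ t, -B ≤ β' t)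
    (hus : r / 2 ≤ u s) (hvs : -C ≤ v s)
    (hC2 : C + Γ * (∫ t in s..(s + δ), p t) + η * δ ≤ C2) (hC20 : 0 ≤ C2) (hC2δ : C2 * δ ≤ r / 4)
    (hQ : Q + C2 ≤ κ * ∫ t in s..(s + δ / 2), n t) (hQδ : r ≤ Q * (δ / 2)) (hQB : B < Q) :
    β e < u e ∧ Q - 2 * B ≤ v e := by
  have hint1 : ∀ t ∈ Icc s (s + δ), ∫ x in s..t, (Γ * p x + η) ≤ Γ * (∫ t in s..(s + δ), p t) + η * δ := by
    intro t ht
    rw [intervalIntegral.integral_add ((hpi _ _).const_mul _) intervalIntegrable_const,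
      intervalIntegral.integral_const_mul]
    have k1 : ∫ x in s..t, p x ≤ ∫ t in s..(s + δ), p t :=
      intervalIntegral.integral_mono_interval le_rfl ht.1 ht.2 (Eventually.of_forall hp0) (hpi _ _)
    have k2 : ∫ x in s..t, η ≤ η * δ := by
      rw [intervalIntegral.integral_const, smul_eq_mul, mul_comm]
      exact mul_le_mul_of_nonneg_left (by linarith [ht.2]) hη
    have := mul_le_mul_of_nonneg_left k1 hΓ
    linarith
  have hv1 : ∀ t ∈ Icc s (s + δ), -C2 ≤ v t := by
    intro t ht
    have e1 := hv s t le_rfl ht.1 (by linarith [ht.2])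
    have : ∫ x in s..t, F x ≤ ∫ x in s..t, (Γ * p x + η) := by
      apply intervalIntegral.integral_mono_on_of_le_Ioo ht.1 (hFi _ _)
        (((hpi _ _).const_mul _).add intervalIntegrable_const)
      intro x hx
      exact hF1 x ⟨hx.1, by linarith [hx.2, ht.2]⟩
    linarith [hint1 t ht]
  have hu1 : ∀ t ∈ Icc s (s + δ), r / 4 ≤ u t := by
    intro t ht
    have := mvt_ge hd ht.1 fun x hx => hv1 x ⟨hx.1, hx.2.trans ht.2⟩
    have h2 : C2 * (t - s) ≤ C2 * δ := mul_le_mul_of_nonneg_left (by linarith [ht.2]) hC20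
    linarith
  have hv2 : ∀ t ∈ Icc (s + δ / 2) (s + δ), Q ≤ v t := by
    intro t ht
    have hst : s ≤ t := by linarith [ht.1]
    have e1 := hv s t le_rfl hst (by linarith [ht.2])
    have h1 : ∫ x in s..t, F x ≤ ∫ x in s..t, (Γ * p x + η - κ * n x) := by
      apply intervalIntegral.integral_mono_on_of_le_Ioo hst (hFi _ _)
        ((((hpi _ _).const_mul _).add intervalIntegrable_const).sub ((hni _ _).const_mul _))
      intro x hx
      exact hF2 x ⟨hx.1, by linarith [hx.2, ht.2]⟩ (hu1 x ⟨hx.1.le, by linarith [hx.2, ht.2]⟩)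
    rw [intervalIntegral.integral_sub (((hpi _ _).const_mul _).add intervalIntegrable_const)
      ((hni _ _).const_mul _), intervalIntegral.integral_const_mul κ] at h1
    have h2 := hint1 t ⟨hst, ht.2⟩
    have h3 : ∫ x in s..(s + δ / 2), n x ≤ ∫ t in s..t, n t :=
      intervalIntegral.integral_mono_interval le_rfl (by linarith) ht.1 (Eventually.of_forall hn0) (hni _ _)
    have := mul_le_mul_of_nonneg_left h3 hκ
    linarith
  have hu2 : r < u (s + δ) := by
    have := mvt_ge hd (show s + δ / 2 ≤ s + δ by linarith) hv2
    have h1 := hu1 (s + δ / 2) ⟨by linarith, by linarith⟩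
    nlinarith
  have hvδ := hv2 (s + δ) ⟨by linarith, le_rfl⟩
  have := mp_forward (w := fun t => u t - β t) (w' := fun t => v t - β' t)
    (fun t => (hd t).sub (hdβ t)) hse (by linarith [hβr (s + δ)])
    (by linarith [hβB (s + δ)]) (by
      intro a b h1
      exact conv_mono hFi hpi hni hv hβ' hF3 a b (by linarith))
  obtain ⟨k1, k2⟩ := this
  have k3 : 0 ≤ (v (s + δ) - β' (s + δ)) * (e - (s + δ)) :=
    mul_nonneg (by linarith [hβB (s + δ)]) (by linarith)
  exact ⟨by linarith [hβr (s + δ)], by linarith [hβB (s + δ), hβB' e]⟩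


lemma abs_min_sub_min_le' (a b c : ℝ) : |min a c - min b c| ≤ |a - b| := by
  have := abs_min_sub_min_le_max a c b c
  simpa using this

lemma abs_max_sub_max_le' (a b c : ℝ) : |max a c - max b c| ≤ |a - b| := by
  have := abs_max_sub_max_le_max a c b c
  simpa using this

theorem core_exists {p n g β β' : ℝ → ℝ}
    {K σ r R M sM ε R0 H C C2 Q B Γ lam γ μ Lg Y δ : ℝ}
    (hσ : 0 < σ) (hδ : 0 < δ) (hσK : σ + δ ≤ K)
    (hpi : ∀ a b, IntervalIntegrable p volume a b) (hni : ∀ a b, IntervalIntegrable n volume a b)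
    (hp0 : ∀ t, 0 ≤ p t) (hn0 : ∀ t, 0 ≤ n t) (hnσ : ∀ᵐ t, t ∈ Icc 0 σ → n t = 0)
    (hgc : Continuous g) (hgneg : ∀ s ≤ 0, g s = 0) (hg0 : ∀ s, 0 ≤ g s)
    (hLg0 : 0 ≤ Lg) (hLg : ∀ a b, a ≤ R → b ≤ R → |g a - g b| ≤ Lg * |a - b|)
    (hr : 0 < r) (hΓ0 : 0 ≤ Γ) (hΓ : ∀ s ≤ 5 * r, g s ≤ Γ) (h5R : 5 * r ≤ R)
    (hΓP : Γ * (∫ t in (0:ℝ)..σ, p t) ≤ r / σ)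
    (hdβ : ∀ t, HasDerivAt β (β' t) t)
    (hβ' : ∀ a b, β' b - β' a = -∫ t in a..b, (Γ * p t - lam * n t))
    (hβB : ∀ t, β' t ≤ B) (hβB' : ∀ t, -B ≤ β' t) (hBr : B < 3 * r / σ)
    (hβr : ∀ t, β t ≤ r) (hβr' : ∀ t, r / 2 ≤ β t) (hβK : β K = β 0)
    (hμ : 0 ≤ μ) (hγ0 : 0 ≤ γ) (hγ : ∀ s ∈ Icc (r / 4) r, γ ≤ g s) (hlam : lam ≤ μ * γ)
    (hM : 0 < M) (hsM : 0 < sM) (hhM : ∀ s, sM ≤ s → M * s ≤ g s) (hε : 0 < ε)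
    (hεσ : ε ≤ σ - ε) (hA : 2 * σ < M * (∫ t in ε..(σ - ε), p t) * ε ^ 2)
    (hR0 : R0 = sM * σ / ε) (hH : ∀ s ∈ Icc 0 R0, g s ≤ H) (hR0R : R0 ≤ R) (hsMR : sM ≤ R)
    (hC : C = R0 / σ + H * (∫ t in (0:ℝ)..σ, p t)) (hYC : C < Y) (hYr : 4 * r / σ ≤ Y)
    (hC2a : C + Γ * (∫ t in σ..(σ + δ), p t) ≤ C2) (hC2b : C + Γ * (∫ t in (K - δ)..K, p t) ≤ C2)
    (hC20 : 0 ≤ C2) (hC2δ : C2 * δ ≤ r / 4)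
    (hQa : Q + C2 ≤ μ * γ * ∫ t in σ..(σ + δ / 2), n t)
    (hQb : Q + C2 ≤ μ * γ * ∫ t in (K - δ / 2)..K, n t)
    (hQδ : r ≤ Q * (δ / 2)) (hQB : B < Q) (hQC : C + 2 * B < Q) :
    ∃ u v : ℝ → ℝ, (∀ t, HasDerivAt u (v t) t) ∧ u K = u 0 ∧ v K = v 0 ∧
      (∀ t ∈ Icc 0 K, v t = v 0 - ∫ s in (0:ℝ)..t, (p s - μ * n s) * g (u s)) ∧
      (∀ t ∈ Icc 0 K, 0 ≤ u t) ∧ (∀ t ∈ Icc σ K, u t ≤ β t) ∧ (∃ t ∈ Icc 0 σ, β t < u t) := by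
  have hR : 0 < R := by linarith
  have hK : 0 < K := by linarith
  have hβc : Continuous β := continuous_iff_continuousAt.2 fun t => (hdβ t).continuousAt
  let f : ℝ → ℝ → ℝ := fun t s =>
    if t ≤ σ then p t * (g (min s R) + M * max (s - R) 0) else (p t - μ * n t) * g (min s (β t))
  let h : ℝ → ℝ := fun s => g (min s R) + M * max (s - R) 0
  have f1 : ∀ t s, t ≤ σ → f t s = p t * h s := fun t s ht => by simp [f, h, ht]
  have f2 : ∀ t s, σ < t → f t s = (p t - μ * n t) * g (min s (β t)) := fun t s ht => by
    simp [f, not_le.2 ht]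
  have hh0 : ∀ s, 0 ≤ h s := fun s => add_nonneg (hg0 _) (mul_nonneg hM.le (le_max_right _ _))
  have hhg : ∀ s ≤ R, h s = g s := fun s hs => by
    simp only [h]; rw [min_eq_left hs, max_eq_right (by linarith)]; ring
  have hfi : ∀ u : ℝ → ℝ, Continuous u → ∀ a b, IntervalIntegrable (fun t => f t (u t)) volume a b := by
    intro u hu a b
    have i1 : IntervalIntegrable (fun t => p t * h (u t)) volume a b := by
      apply (hpi a b).mul_continuousOn
      apply Continuous.continuousOn
      simp only [h]; fun_prop
    have i2 : IntervalIntegrable (fun t => (p t - μ * n t) * g (min (u t) (β t))) volume a b := by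
      apply ((hpi a b).sub ((hni a b).const_mul μ)).mul_continuousOn
      apply Continuous.continuousOn
      fun_prop
    rw [intervalIntegrable_iff] at i1 i2 ⊢
    have := Integrable.piecewise (s := Iic σ) measurableSet_Iic (i1.integrable.integrableOn (s := Iic σ))
      (i2.integrable.integrableOn (s := (Iic σ)ᶜ))
    refine this.congr (Eventually.of_forall fun t => ?_)
    by_cases ht : t ≤ σ
    · rw [piecewise_eq_of_mem _ _ _ (show t ∈ Iic σ from ht)]; exact (f1 t _ ht).symm
    · rw [piecewise_eq_of_notMem _ _ _ (show t ∉ Iic σ from ht)]; exact (f2 t _ (not_le.1 ht)).symm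
  have hlip : ∀ t s s', |f t s - f t s'| ≤ ((p t + μ * n t) * (Lg + M)) * |s - s'| := by
    intro t s s'
    have hpn : 0 ≤ μ * n t := mul_nonneg hμ (hn0 t)
    rcases le_or_gt t σ with ht | ht
    · rw [f1 _ _ ht, f1 _ _ ht, ← mul_sub, abs_mul, abs_of_nonneg (hp0 t), mul_assoc]
      have : |h s - h s'| ≤ (Lg + M) * |s - s'| := by
        have e : h s - h s' = (g (min s R) - g (min s' R)) + M * (max (s - R) 0 - max (s' - R) 0) := by
          simp only [h]; ring
        rw [e]
        refine (abs_add_le _ _).trans ?_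
        rw [abs_mul, abs_of_pos hM, add_mul]
        apply add_le_add
        · refine (hLg _ _ (min_le_right _ _) (min_le_right _ _)).trans ?_
          exact mul_le_mul_of_nonneg_left (abs_min_sub_min_le' _ _ _) hLg0
        · refine mul_le_mul_of_nonneg_left ((abs_max_sub_max_le' _ _ _).trans (le_of_eq ?_)) hM.le
          congr 1; ring
      refine mul_le_mul (by linarith) this (abs_nonneg _) (by linarith [hp0 t])
    · rw [f2 _ _ ht, f2 _ _ ht, ← mul_sub, abs_mul, mul_assoc]
      have b1 : |p t - μ * n t| ≤ p t + μ * n t := by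
        rw [abs_le]; constructor <;> linarith [hp0 t]
      have hbR : β t ≤ R := by linarith [hβr t]
      have b2 : |g (min s (β t)) - g (min s' (β t))| ≤ (Lg + M) * |s - s'| := by
        refine (hLg _ _ ((min_le_right _ _).trans hbR) ((min_le_right _ _).trans hbR)).trans ?_
        refine mul_le_mul (by linarith) (abs_min_sub_min_le' _ _ _) (abs_nonneg _) (by linarith)
      exact mul_le_mul b1 b2 (abs_nonneg _) (by linarith [hp0 t])
  obtain ⟨U, V, hU0, hUd, hVi, hUc, hVc⟩ := ivp_family K hK f (fun t => (p t + μ * n t) * (Lg + M))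
    (fun t => mul_nonneg (add_nonneg (hp0 t) (mul_nonneg hμ (hn0 t))) (by linarith))
    (fun a b => ((hpi a b).add ((hni a b).const_mul μ)).mul_const _) hlip hfi
  have hUcont : ∀ z, Continuous (U z) := fun z =>
    continuous_iff_continuousAt.2 fun t => (hUd z t).continuousAt
  have hV0 : ∀ z, V z 0 = z.2 := fun z => by rw [hVi z 0 ⟨le_rfl, hK.le⟩]; simp
  have hFi : ∀ z a b, IntervalIntegrable (fun t => f t (U z t)) volume a b := fun z => hfi _ (hUcont z)
  have hV : ∀ z a b, 0 ≤ a → a ≤ b → b ≤ K → V z b - V z a = -∫ s in a..b, f s (U z s) := by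
    intro z a b h1 h2 h3
    rw [hVi z a ⟨h1, h2.trans h3⟩, hVi z b ⟨h1.trans h2, h3⟩,
      ← intervalIntegral.integral_add_adjacent_intervals (hFi z 0 a) (hFi z a b)]
    ring
  -- pointwise facts on f
  have fneg : ∀ t s, s ≤ 0 → f t s = 0 := by
    intro t s hs
    rcases le_or_gt t σ with ht | ht
    · rw [f1 _ _ ht, hhg s (by linarith), hgneg s hs, mul_zero]
    · rw [f2 _ _ ht, hgneg _ ((min_le_left _ _).trans hs), mul_zero]
  have fF1 : ∀ t s, σ < t → f t s ≤ Γ * p t + 0 := by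
    intro t s ht
    rw [f2 _ _ ht]
    have k1 : g (min s (β t)) ≤ Γ := hΓ _ ((min_le_right _ _).trans (by linarith [hβr t]))
    have k2 := mul_le_mul_of_nonneg_left k1 (hp0 t)
    have k3 := mul_nonneg (mul_nonneg hμ (hn0 t)) (hg0 (min s (β t)))
    linarith
  have fF2 : ∀ t s, σ < t → r / 4 ≤ s → f t s ≤ Γ * p t + 0 - (μ * γ) * n t := by
    intro t s ht hs
    rw [f2 _ _ ht]
    have k1 : g (min s (β t)) ≤ Γ := hΓ _ ((min_le_right _ _).trans (by linarith [hβr t]))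
    have k2 := mul_le_mul_of_nonneg_left k1 (hp0 t)
    have k4 : γ ≤ g (min s (β t)) :=
      hγ _ ⟨le_min hs (by linarith [hβr' t]), (min_le_right _ _).trans (hβr t)⟩
    have k3 := mul_le_mul_of_nonneg_left k4 (mul_nonneg hμ (hn0 t))
    linarith
  have fF3 : ∀ t s, σ < t → β t ≤ s → f t s ≤ Γ * p t - lam * n t := by
    intro t s ht hs
    have k1 := fF2 t s ht (by linarith [hβr' t])
    have k2 := mul_le_mul_of_nonneg_right hlam (hn0 t)
    linarith
  -- nonnegativity
  have hnn : ∀ z : ℝ × ℝ, 0 ≤ z.1 → 0 ≤ U z K → ∀ t ∈ Icc 0 K, 0 ≤ U z t := by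
    intro z h1 h2
    exact sol_nonneg (hUd z) (hV z) (fun t _ hs => (fneg t _ hs).ge) (by rw [hU0]; exact h1) h2
  -- a priori bounds
  have hhM' : ∀ s, sM ≤ s → M * s ≤ h s := by
    intro s hs
    rcases le_total s R with h1 | h1
    · rw [hhg s h1]; exact hhM s hs
    · simp only [h]; rw [min_eq_right h1, max_eq_left (by linarith)]
      have := hhM R hsMR
      linarith
  have hap : ∀ z, (∀ t ∈ Icc 0 σ, 0 ≤ U z t) → (∀ t ∈ Icc 0 σ, U z t ≤ R0) ∧ z.2 ≤ C ∧ -C ≤ V z σ := by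
    intro z hz
    have := apriori (hUd z) hσ (hFi z) hpi hp0
      (fun a b h1 h2 h3 => hV z a b h1 h2 (by linarith)) hz (fun t ht => f1 t _ ht.2)
      (fun s _ => hh0 s) hM hsM hhM' hε hεσ hA hR0 (H := H)
      (fun s hs => by rw [hhg s (hs.2.trans hR0R)]; exact hH s hs)
    rw [hV0, ← hC] at this
    exact this
  have hconv : ∀ z, ∀ a b, σ ≤ a → a ≤ b → b ≤ K → (∀ t ∈ Icc a b, 0 ≤ U z t - β t) →
      V z a - β' a ≤ V z b - β' b := fun z =>
    conv_mono (hFi z) hpi hni (fun a b h1 h2 h3 => hV z a b (by linarith) h2 h3)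
      (fun a b _ _ _ => hβ' a b) (fun t ht hs => fF3 t _ ht.1 hs)
  -- bottom
  have hbot : ∀ x ∈ Icc 0 (β 0), x < U (x, 4 * r / σ) K := by
    intro x hx
    set z : ℝ × ℝ := (x, 4 * r / σ) with hz
    have hf0 : ∀ t ∈ Icc 0 σ, 0 ≤ f t (U z t) := fun t ht => by
      rw [f1 _ _ ht.2]; exact mul_nonneg (hp0 t) (hh0 _)
    have hVle : ∀ t ∈ Icc 0 σ, V z t ≤ 4 * r / σ := by
      intro t ht
      have := hV z 0 t le_rfl ht.1 (by linarith [ht.2])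
      rw [hV0] at this
      have h2 : 0 ≤ ∫ s in (0:ℝ)..t, f s (U z s) := intervalIntegral.integral_nonneg ht.1 fun s hs =>
        hf0 s ⟨hs.1, hs.2.trans ht.2⟩
      simp only [hz] at this ⊢
      linarith
    have hU5 : ∀ t ∈ Icc 0 σ, U z t ≤ 5 * r := by
      intro t ht
      have := mvt_le (hUd z) ht.1 fun s hs => hVle s ⟨hs.1, hs.2.trans ht.2⟩
      rw [hU0] at this
      have h2 : 4 * r / σ * (t - 0) ≤ 4 * r / σ * σ :=
        mul_le_mul_of_nonneg_left (by linarith [ht.2]) (by positivity)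
      have h3 : 4 * r / σ * σ = 4 * r := by field_simp
      have h4 : z.1 ≤ r := hx.2.trans (hβr 0)
      linarith
    have hVge : ∀ t ∈ Icc 0 σ, 3 * r / σ ≤ V z t := by
      intro t ht
      have := hV z 0 t le_rfl ht.1 (by linarith [ht.2])
      rw [hV0] at this
      have h2 : ∫ s in (0:ℝ)..t, f s (U z s) ≤ ∫ s in (0:ℝ)..t, Γ * p s := by
        apply intervalIntegral.integral_mono_on ht.1 (hFi z _ _) ((hpi _ _).const_mul _)
        intro s hs
        have hs' : s ∈ Icc 0 σ := ⟨hs.1, hs.2.trans ht.2⟩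
        rw [f1 _ _ hs'.2, mul_comm, hhg _ ((hU5 s hs').trans h5R)]
        exact mul_le_mul_of_nonneg_right (hΓ _ (hU5 s hs')) (hp0 s)
      rw [intervalIntegral.integral_const_mul] at h2
      have h3 : ∫ s in (0:ℝ)..t, p s ≤ ∫ s in (0:ℝ)..σ, p s :=
        intervalIntegral.integral_mono_interval le_rfl ht.1 ht.2 (Eventually.of_forall hp0) (hpi _ _)
      have h4 := mul_le_mul_of_nonneg_left h3 hΓ0
      have h5 : 3 * r / σ = 4 * r / σ - r / σ := by ring
      rw [h5]
      simp only [hz] at this ⊢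
      linarith
    have hUσ : 3 * r ≤ U z σ := by
      have := mvt_ge (hUd z) hσ.le hVge
      rw [hU0] at this
      have h3 : 3 * r / σ * (σ - 0) = 3 * r := by field_simp; ring
      have h4 : 0 ≤ z.1 := hx.1
      linarith
    have := (mp_forward (w := fun t => U z t - β t) (w' := fun t => V z t - β' t)
      (fun t => (hUd z t).sub (hdβ t)) (s := σ) (e := K) (by linarith) (by linarith [hβr σ])
      (by linarith [hβB σ, hVge σ ⟨hσ.le, le_rfl⟩]) (hconv z)).2
    have h3 : 0 ≤ (V z σ - β' σ) * (K - σ) :=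
      mul_nonneg (by linarith [hβB σ, hVge σ ⟨hσ.le, le_rfl⟩]) (by linarith)
    have h4 := hβr σ
    have h5 := hx.2
    linarith
  -- top
  have htop : ∀ x ∈ Icc 0 (β 0), U (x, Y) K < x := by
    intro x hx
    by_contra hcon
    push Not at hcon
    have h1 := hnn (x, Y) hx.1 (hx.1.trans hcon)
    have := (hap (x, Y) fun t ht => h1 t ⟨ht.1, by linarith [ht.2]⟩).2.1
    simp only at this
    linarith
  -- left
  have hy0 : 0 < 4 * r / σ := by positivity
  have hleft : ∀ y ∈ Icc (4 * r / σ) Y, U (0, y) K - 0 = 0 → 0 < y - V (0, y) K := by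
    intro y hy h0
    rw [sub_zero] at h0
    have h1 := hnn (0, y) le_rfl h0.ge
    by_contra hcon
    push Not at hcon
    have hVpos : 0 < V (0, y) K := by linarith [hy.1]
    obtain ⟨e, he, h2⟩ := right_gt (w := fun t => -U (0, y) (-t)) (q := -K) (c := V (0, y) K) (by
      have h9 := hUd (0, y) (- -K)
      have := (h9.comp (-K) (hasDerivAt_neg (-K))).neg
      have h8 : V (0, y) K = -(V (0, y) (- -K) * -1) := by rw [neg_neg]; ring
      rw [h8]; exact this) hVpos
    have h3 := h2 (-K + min (e / 2) K) (by linarith [lt_min (half_pos he) hK])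
      (by linarith [min_le_left (e / 2) K])
    simp only [neg_neg, h0] at h3
    have h4 := h1 (-(-K + min (e / 2) K)) ⟨by linarith [min_le_right (e / 2) K],
      by linarith [lt_min (half_pos he) hK]⟩
    linarith
  -- right
  have hright : ∀ y ∈ Icc (4 * r / σ) Y, U (β 0, y) K - β 0 = 0 → y - V (β 0, y) K < 0 := by
    intro y hy h0
    set z : ℝ × ℝ := (β 0, y) with hz
    have hb0 : 0 < β 0 := by linarith [hβr' 0]
    have hUK : U z K = β 0 := by linarith
    have h1 := hnn z hb0.le (by rw [hUK]; exact hb0.le)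
    obtain ⟨-, h2, h3⟩ := hap z fun t ht => h1 t ⟨ht.1, by linarith [ht.2]⟩
    by_contra hcon
    push Not at hcon
    have hVK : V z K ≤ C := by
      have : z.2 = y := rfl
      linarith
    have := exit_lemma (u := fun t => U z (-t)) (v := fun t => -V z (-t))
      (F := fun t => f (-t) (U z (-t))) (β := fun t => β (-t)) (β' := fun t => -β' (-t))
      (p := fun t => p (-t)) (n := fun t => n (-t)) (s := -K) (e := -σ) (Γ := Γ) (lam := lam)
      (η := 0) (κ := μ * γ) (r := r) (δ := δ) (C := C) (C2 := C2) (Q := Q) (B := B)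
      (fun t => by
        have := (hUd z (-t)).comp t (hasDerivAt_neg t)
        simpa [Function.comp_def] using this)
      (fun t => by
        have := (hdβ (-t)).comp t (hasDerivAt_neg t)
        simpa [Function.comp_def] using this)
      (fun a b => by simpa using ((hFi z (-a) (-b)).comp_sub_left 0))
      (fun a b => by simpa using ((hpi (-a) (-b)).comp_sub_left 0))
      (fun a b => by simpa using ((hni (-a) (-b)).comp_sub_left 0))
      (fun t => hp0 _) (fun t => hn0 _) hΓ0 le_rfl (mul_nonneg hμ hγ0) hr hδ (by linarith)
      (fun a b h1 h2 h3 => by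
        have := hV z (-b) (-a) (by linarith) (by linarith) (by linarith)
        rw [intervalIntegral.integral_comp_neg (fun t => f t (U z t))]
        linarith)
      (fun a b h1 h2 h3 => by
        have := hβ' (-b) (-a)
        rw [intervalIntegral.integral_comp_neg (fun t => Γ * p t - lam * n t)]
        linarith)
      (fun t ht => fF1 _ _ (by linarith [ht.2]))
      (fun t ht => fF2 _ _ (by linarith [ht.2]))
      (fun t ht => fF3 _ _ (by linarith [ht.2]))
      (fun t => hβr _) (fun t => by linarith [hβB' (-t)]) (fun t => by linarith [hβB (-t)])
      (by simp only [neg_neg, hUK]; linarith [hβr' 0]) (by simp only [neg_neg]; linarith)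
      (by
        rw [intervalIntegral.integral_comp_neg (fun t => p t)]
        simp only [neg_neg, neg_add, zero_mul, add_zero]
        rw [← sub_eq_add_neg]; exact hC2b)
      hC20 hC2δ
      (by
        rw [intervalIntegral.integral_comp_neg (fun t => n t)]
        simp only [neg_neg, neg_add]
        rw [← sub_eq_add_neg]; exact hQb)
      hQδ hQB
    have h5 := this.2
    simp only [neg_neg] at h5
    linarith
  obtain ⟨x, hx, y, hy, hz1, hz2⟩ := miranda (fun z => U z K - z.1) (fun z => z.2 - V z K)
    (by fun_prop) (by fun_prop) (xl := 0) (xr := β 0) (yl := 4 * r / σ) (yr := Y)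
    (by linarith [hβr' 0]) hYr (fun x hx => by have := hbot x hx; simp only; linarith)
    (fun x hx => by have := htop x hx; simp only; linarith) hleft hright
  set z : ℝ × ℝ := (x, y) with hz
  have hUK : U z K = x := sub_eq_zero.1 hz1
  have hVK : V z K = y := (sub_eq_zero.1 hz2).symm
  have hU0' : U z 0 = x := hU0 z
  have hV0' : V z 0 = y := hV0 z
  have hpos := hnn z hx.1 (by rw [hUK]; exact hx.1)
  obtain ⟨hbd, hyC, hVσ⟩ := hap z fun t ht => hpos t ⟨ht.1, by linarith [ht.2]⟩
  have hKle : U z K ≤ β K := by rw [hUK, hβK]; exact hx.2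
  have hσle : U z σ ≤ β σ := by
    by_contra hcon
    push Not at hcon
    have := exit_lemma (s := σ) (e := K) (κ := μ * γ) (η := 0) (hUd z) hdβ (hFi z) hpi hni hp0 hn0 hΓ0
      le_rfl (mul_nonneg hμ hγ0) hr hδ hσK (fun a b h1 h2 h3 => hV z a b (by linarith) h2 h3)
      (fun a b _ _ _ => hβ' a b) (fun t ht => fF1 _ _ ht.1) (fun t ht => fF2 _ _ ht.1)
      (fun t ht => fF3 _ _ ht.1) hβr hβB hβB' (by linarith [hβr' σ]) hVσ
      (by rw [zero_mul, add_zero]; exact hC2a) hC20 hC2δ hQa hQδ hQB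
    linarith [this.1]
  have hJ : ∀ t ∈ Icc σ K, U z t ≤ β t := by
    intro t ht
    have := mp_out (w := fun t => U z t - β t) (w' := fun t => V z t - β' t)
      (fun t => (hUd z t).sub (hdβ t)) (s := σ) (e := K) (by linarith) (by linarith) (hconv z) t ht
    linarith
  refine ⟨U z, V z, hUd z, by rw [hUK, hU0'], by rw [hVK, hV0'], ?_, hpos, hJ, ?_⟩
  · intro t ht
    rw [hVi z t ht, hV0']
    congr 1
    apply intervalIntegral.integral_congr_ae
    filter_upwards [hnσ] with s hs hst
    rw [uIoc_of_le ht.1] at hst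
    rcases le_or_gt s σ with h1 | h1
    · rw [f1 _ _ h1, hs ⟨hst.1.le, h1⟩, hhg _ ((hbd s ⟨hst.1.le, h1⟩).trans hR0R)]; ring
    · rw [f2 _ _ h1, min_eq_left (hJ s ⟨h1.le, hst.2.trans ht.2⟩)]
  · by_contra hcon
    push Not at hcon
    -- all values at most r, but slope large
    have hle : ∀ t ∈ Icc 0 σ, U z t ≤ 5 * r := fun t ht => by linarith [hcon t ht, hβr t]
    have hVge : ∀ t ∈ Icc 0 σ, 3 * r / σ ≤ V z t := by
      intro t ht
      have := hV z 0 t le_rfl ht.1 (by linarith [ht.2])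
      rw [hV0'] at this
      have h2 : ∫ s in (0:ℝ)..t, f s (U z s) ≤ ∫ s in (0:ℝ)..t, Γ * p s := by
        apply intervalIntegral.integral_mono_on ht.1 (hFi z _ _) ((hpi _ _).const_mul _)
        intro s hs
        have hs' : s ∈ Icc 0 σ := ⟨hs.1, hs.2.trans ht.2⟩
        rw [f1 _ _ hs'.2, mul_comm, hhg _ ((hle s hs').trans h5R)]
        exact mul_le_mul_of_nonneg_right (hΓ _ (hle s hs')) (hp0 s)
      rw [intervalIntegral.integral_const_mul] at h2
      have h3 : ∫ s in (0:ℝ)..t, p s ≤ ∫ s in (0:ℝ)..σ, p s :=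
        intervalIntegral.integral_mono_interval le_rfl ht.1 ht.2 (Eventually.of_forall hp0) (hpi _ _)
      have h4 := mul_le_mul_of_nonneg_left h3 hΓ0
      have h5 : 3 * r / σ = 4 * r / σ - r / σ := by ring
      rw [h5]
      linarith [hy.1]
    have := mvt_ge (hUd z) hσ.le hVge
    have h3 : 3 * r / σ * (σ - 0) = 3 * r := by field_simp; ring
    linarith [hcon σ ⟨hσ.le, le_rfl⟩, hβr σ, hx.1]


lemma per_primitive {f : ℝ → ℝ} {T : ℝ} (hf : Function.Periodic f T)
    (hi : ∀ a b, IntervalIntegrable f volume a b) (h0 : ∫ t in (0:ℝ)..T, f t = 0) :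
    Function.Periodic (fun t => ∫ s in (0:ℝ)..t, f s) T := by
  intro t
  have h1 := hf.intervalIntegral_add_eq t 0
  rw [zero_add, h0] at h1
  have h2 := intervalIntegral.integral_add_adjacent_intervals (hi 0 t) (hi t (t + T))
  simp only
  linarith

lemma beta_exists {p n : ℝ → ℝ} {T Γ r : ℝ} (hT : 0 < T)
    (hpi : ∀ a b, IntervalIntegrable p volume a b) (hni : ∀ a b, IntervalIntegrable n volume a b)
    (hp0 : ∀ t, 0 ≤ p t) (hn0 : ∀ t, 0 ≤ n t) (hpp : Function.Periodic p T)
    (hnp : Function.Periodic n T) (hAn : 0 < ∫ t in (0:ℝ)..T, n t) (hΓ : 0 ≤ Γ)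
    (hr : 8 * Γ * (∫ t in (0:ℝ)..T, p t) * T ≤ r) :
    ∃ β β' : ℝ → ℝ, ∃ lam : ℝ, (∀ t, HasDerivAt β (β' t) t) ∧
      (∀ a b, β' b - β' a = -∫ t in a..b, (Γ * p t - lam * n t)) ∧
      (∀ t, β' t ≤ 2 * Γ * ∫ t in (0:ℝ)..T, p t) ∧ (∀ t, -(2 * Γ * ∫ t in (0:ℝ)..T, p t) ≤ β' t) ∧
      (∀ t, β t ≤ r) ∧ (∀ t, r / 2 ≤ β t) ∧ Function.Periodic β T := by
  set Ap := ∫ t in (0:ℝ)..T, p t with hAp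
  set An := ∫ t in (0:ℝ)..T, n t with hAn'
  have hAp0 : 0 ≤ Ap := intervalIntegral.integral_nonneg hT.le fun t _ => hp0 t
  obtain ⟨lam, hlam⟩ : ∃ l, l = Γ * Ap / An := ⟨_, rfl⟩
  have hlA : lam * An = Γ * Ap := by rw [hlam]; field_simp
  have hl0 : 0 ≤ lam := by rw [hlam]; positivity
  let w : ℝ → ℝ := fun t => Γ * p t - lam * n t
  have hwi : ∀ a b, IntervalIntegrable w volume a b := fun a b =>
    ((hpi a b).const_mul Γ).sub ((hni a b).const_mul lam)
  have hwint : ∀ a b, ∫ t in a..b, w t = Γ * (∫ t in a..b, p t) - lam * ∫ t in a..b, n t := by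
    intro a b
    simp only [w]
    rw [intervalIntegral.integral_sub ((hpi a b).const_mul Γ) ((hni a b).const_mul lam),
      intervalIntegral.integral_const_mul, intervalIntegral.integral_const_mul]
  have hwp : Function.Periodic w T := fun t => by simp only [w]; rw [hpp, hnp]
  have hw0 : ∫ t in (0:ℝ)..T, w t = 0 := by rw [hwint]; linarith
  have hφp := per_primitive hwp hwi hw0
  set φ : ℝ → ℝ := fun t => ∫ s in (0:ℝ)..t, w s with hφ
  have hφc : Continuous φ := intervalIntegral.continuous_primitive hwi 0
  have hφb : ∀ t, |φ t| ≤ Γ * Ap := by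
    intro t
    obtain ⟨y, hy, e⟩ := hφp.exists_mem_Ico₀ hT t
    rw [e]
    have i1 : ∫ s in (0:ℝ)..y, p s ≤ Ap :=
      intervalIntegral.integral_mono_interval le_rfl hy.1 hy.2.le (Eventually.of_forall hp0) (hpi _ _)
    have i2 : ∫ s in (0:ℝ)..y, n s ≤ An :=
      intervalIntegral.integral_mono_interval le_rfl hy.1 hy.2.le (Eventually.of_forall hn0) (hni _ _)
    have i3 : 0 ≤ ∫ s in (0:ℝ)..y, p s := intervalIntegral.integral_nonneg hy.1 fun t _ => hp0 t
    have i4 : 0 ≤ ∫ s in (0:ℝ)..y, n s := intervalIntegral.integral_nonneg hy.1 fun t _ => hn0 t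
    simp only [hφ]
    rw [hwint, abs_le]
    have j1 := mul_le_mul_of_nonneg_left i1 hΓ
    have j2 := mul_le_mul_of_nonneg_left i2 hl0
    have j3 := mul_nonneg hΓ i3
    have j4 := mul_nonneg hl0 i4
    constructor <;> linarith
  obtain ⟨mm, hm⟩ : ∃ m, m = (∫ t in (0:ℝ)..T, φ t) / T := ⟨_, rfl⟩
  have hmb : |mm| ≤ Γ * Ap := by
    have := intervalIntegral.norm_integral_le_of_norm_le_const (a := 0) (b := T) (f := φ)
      (C := Γ * Ap) (fun t _ => hφb t)
    rw [hm, abs_div, abs_of_pos hT, div_le_iff₀ hT]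
    simpa [abs_of_pos hT] using this
  let b' : ℝ → ℝ := fun t => mm - φ t
  have hb'c : Continuous b' := by fun_prop
  have hb'b : ∀ t, |b' t| ≤ 2 * Γ * Ap := fun t => by
    have := abs_sub mm (φ t)
    simp only [b']; linarith [hφb t]
  have hb'p : Function.Periodic b' T := fun t => by simp only [b']; rw [hφp]
  have hb'i : ∀ a b, IntervalIntegrable b' volume a b := fun a b => hb'c.intervalIntegrable _ _
  have hb'0 : ∫ t in (0:ℝ)..T, b' t = 0 := by
    simp only [b']
    rw [intervalIntegral.integral_sub (by simp) (hφc.intervalIntegrable _ _)]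
    simp; rw [hm]; field_simp; ring
  have hψp := per_primitive hb'p hb'i hb'0
  set ψ : ℝ → ℝ := fun t => ∫ s in (0:ℝ)..t, b' s with hψ
  have hψb : ∀ t, |ψ t| ≤ r / 4 := by
    intro t
    obtain ⟨y, hy, e⟩ := hψp.exists_mem_Ico₀ hT t
    rw [e]
    have := intervalIntegral.norm_integral_le_of_norm_le_const (a := 0) (b := y) (f := b')
      (C := 2 * Γ * Ap) (fun t _ => hb'b t)
    rw [sub_zero, abs_of_nonneg hy.1, Real.norm_eq_abs] at this
    refine this.trans ?_
    have : 2 * Γ * Ap * y ≤ 2 * Γ * Ap * T := mul_le_mul_of_nonneg_left hy.2.le (by positivity)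
    linarith
  refine ⟨fun t => 3 * r / 4 + ψ t, b', lam, fun t => ?_, fun a b => ?_, fun t => (abs_le.1 (hb'b t)).2,
    fun t => (abs_le.1 (hb'b t)).1, fun t => ?_, fun t => ?_, fun t => ?_⟩
  · exact (intervalIntegral.integral_hasDerivAt_right (hb'i 0 t) (hb'c.stronglyMeasurableAtFilter _ _)
      hb'c.continuousAt).const_add _
  · have := intervalIntegral.integral_add_adjacent_intervals (hwi 0 a) (hwi a b)
    simp only [b', hφ]
    linarith
  · linarith [(abs_le.1 (hψb t)).2]
  · linarith [(abs_le.1 (hψb t)).1]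
  · simp only; rw [hψp]


lemma per_shift_int {f : ℝ → ℝ} {T : ℝ} (hf : Function.Periodic f T) (k : ℕ) (d : ℝ) :
    ∫ t in (k * T - d)..(k * T), f t = ∫ t in (-d)..0, f t := by
  have h := intervalIntegral.integral_comp_add_right (a := -d) (b := 0) f (k * T)
  rw [zero_add, neg_add_eq_sub] at h
  rw [← h]
  apply intervalIntegral.integral_congr
  intro t _
  exact (hf.nat_mul k) t

set_option maxHeartbeats 1600000 in
theorem core_main {p n g : ℝ → ℝ} {T σ : ℝ} (hσ : 0 < σ) (hσT : σ < T)
    (hpi : ∀ a b, IntervalIntegrable p volume a b) (hni : ∀ a b, IntervalIntegrable n volume a b)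
    (hp0 : ∀ t, 0 ≤ p t) (hn0 : ∀ t, 0 ≤ n t) (hpp : Function.Periodic p T)
    (hnp : Function.Periodic n T) (hnσ : ∀ᵐ t, t ∈ Icc 0 σ → n t = 0)
    (hpσ : 0 < ∫ t in (0:ℝ)..σ, p t) (hn1 : ∀ d > 0, 0 < ∫ t in σ..(σ + d), n t)
    (hn2 : ∀ d > 0, 0 < ∫ t in (-d)..0, n t)
    (hgc : Continuous g) (hgneg : ∀ s ≤ 0, g s = 0) (hgpos : ∀ s, 0 < s → 0 < g s)
    (hgL : ∀ R, ∃ L, 0 ≤ L ∧ ∀ a b, a ≤ R → b ≤ R → |g a - g b| ≤ L * |a - b|)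
    (hgs : ∀ e > 0, ∃ r > 0, ∀ s, 0 ≤ s → s ≤ r → g s ≤ e * s)
    (hgM : ∀ M, ∃ s0 > 0, ∀ s, s0 ≤ s → M * s ≤ g s) :
    ∃ μs : ℝ, 0 < μs ∧ ∀ μ, μs < μ → ∀ k : ℕ, 1 ≤ k → ∃ β u v : ℝ → ℝ, Function.Periodic β T ∧
      (∀ t, 0 < β t) ∧
      (∀ t, HasDerivAt u (v t) t) ∧ u (k * T) = u 0 ∧ v (k * T) = v 0 ∧
      (∀ t ∈ Icc 0 (k * T), v t = v 0 - ∫ s in (0:ℝ)..t, (p s - μ * n s) * g (u s)) ∧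
      (∀ t ∈ Icc 0 (k * T), 0 ≤ u t) ∧ (∀ t ∈ Icc σ (k * T), u t ≤ β t) ∧
      (∃ t ∈ Icc 0 σ, β t < u t) := by
  have hT : 0 < T := hσ.trans hσT
  have hg0 : ∀ s, 0 ≤ g s := fun s => by
    rcases le_or_gt s 0 with h | h
    · rw [hgneg s h]
    · exact (hgpos s h).le
  have monoP : ∀ a b c d, c ≤ a → a ≤ b → b ≤ d → ∫ t in a..b, p t ≤ ∫ t in c..d, p t :=
    fun a b c d h1 h2 h3 => intervalIntegral.integral_mono_interval h1 h2 h3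
      (Eventually.of_forall hp0) (hpi _ _)
  obtain ⟨Ap, hAp⟩ : ∃ A, A = ∫ t in (0:ℝ)..T, p t := ⟨_, rfl⟩
  have hPA : ∫ t in (0:ℝ)..σ, p t ≤ Ap := by rw [hAp]; exact monoP _ _ _ _ le_rfl hσ.le hσT.le
  have hAp0 : 0 < Ap := lt_of_lt_of_le hpσ hPA
  have hAn : 0 < ∫ t in (0:ℝ)..T, n t := by
    have h1 := hn1 (T - σ) (by linarith)
    rw [add_sub_cancel] at h1
    refine lt_of_lt_of_le h1 ?_
    exact intervalIntegral.integral_mono_interval hσ.le hσT.le le_rfl (Eventually.of_forall hn0) (hni _ _)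
  -- small constants
  obtain ⟨r5, hr5, hgr⟩ := hgs (1 / (40 * Ap * T)) (by positivity)
  obtain ⟨r, hr⟩ : ∃ r, r = r5 / 5 := ⟨_, rfl⟩
  have hr0 : 0 < r := by rw [hr]; positivity
  obtain ⟨Γ, hΓd⟩ : ∃ G, G = r / (8 * Ap * T) := ⟨_, rfl⟩
  have hΓ0 : 0 < Γ := by rw [hΓd]; positivity
  have hΓA : Γ * Ap = r / (8 * T) := by rw [hΓd]; field_simp
  have hΓ : ∀ s ≤ 5 * r, g s ≤ Γ := by
    intro s hs
    rcases le_total s 0 with h | h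
    · rw [hgneg s h]; exact hΓ0.le
    · refine (hgr s h (by linarith)).trans ?_
      have : 1 / (40 * Ap * T) * s ≤ 1 / (40 * Ap * T) * (5 * r) :=
        mul_le_mul_of_nonneg_left hs (by positivity)
      refine this.trans (le_of_eq ?_)
      rw [hΓd]; field_simp; ring
  obtain ⟨β, β', lam, hdβ, hβ', hβB, hβB', hβr, hβr', hβp⟩ := beta_exists (Γ := Γ) (r := r) hT hpi hni
    hp0 hn0 hpp hnp hAn hΓ0.le (by rw [← hAp, mul_assoc 8, hΓA]; apply le_of_eq; field_simp)
  rw [← hAp] at hβB hβB'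
  obtain ⟨B, hB⟩ : ∃ B, B = 2 * Γ * Ap := ⟨_, rfl⟩
  rw [← hB] at hβB hβB'
  have hB' : B = r / (4 * T) := by rw [hB, mul_assoc, hΓA]; field_simp; ring
  have hB0 : 0 < B := by rw [hB']; positivity
  have hrT : r / T < r / σ := div_lt_div_of_pos_left hr0 hσ hσT
  have hrT0 : 0 < r / T := by positivity
  have hBr : B < 3 * r / σ := by
    have e1 : B = (r / T) / 4 := by rw [hB']; field_simp
    have e2 : 3 * r / σ = 3 * (r / σ) := by ring
    rw [e1, e2]; linarith
  have hΓP : Γ * (∫ t in (0:ℝ)..σ, p t) ≤ r / σ := by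
    refine (mul_le_mul_of_nonneg_left hPA hΓ0.le).trans ?_
    have e1 : Γ * Ap = (r / T) / 8 := by rw [hΓA]; field_simp
    rw [e1]; linarith
  -- a priori constants
  obtain ⟨ε, hε, hεσ, hεA⟩ : ∃ ε > 0, ε ≤ σ - ε ∧ 0 < ∫ t in ε..(σ - ε), p t := by
    have hc : Continuous fun e : ℝ => ∫ t in e..(σ - e), p t := by
      have h1 : Continuous fun x : ℝ => ∫ t in (0:ℝ)..x, p t := intervalIntegral.continuous_primitive hpi 0
      have e : (fun e : ℝ => ∫ t in e..(σ - e), p t) =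
          fun e => (∫ t in (0:ℝ)..(σ - e), p t) - ∫ t in (0:ℝ)..e, p t := by
        funext e
        rw [intervalIntegral.integral_interval_sub_left (hpi _ _) (hpi _ _)]
      rw [e]
      exact (h1.comp (continuous_const.sub continuous_id)).sub h1
    have h2 : ∀ᶠ e in nhds (0:ℝ), 0 < ∫ t in e..(σ - e), p t :=
      hc.continuousAt.eventually (lt_mem_nhds (by simpa using hpσ))
    obtain ⟨d, hd, h3⟩ := Metric.eventually_nhds_iff.1 h2
    refine ⟨min (d / 2) (σ / 2), by positivity, ?_, ?_⟩
    · linarith [min_le_right (d / 2) (σ / 2)]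
    · apply h3
      rw [Real.dist_eq, sub_zero, abs_of_pos (by positivity)]
      linarith [min_le_left (d / 2) (σ / 2)]
  obtain ⟨A, hAd⟩ : ∃ A, A = ∫ t in ε..(σ - ε), p t := ⟨_, rfl⟩
  rw [← hAd] at hεA
  obtain ⟨M, hMd⟩ : ∃ M, M = (2 * σ + 1) / (A * ε ^ 2) := ⟨_, rfl⟩
  have hM : 0 < M := by rw [hMd]; positivity
  have hMA : 2 * σ < M * A * ε ^ 2 := by
    have : M * A * ε ^ 2 = 2 * σ + 1 := by rw [hMd]; field_simp
    linarith
  obtain ⟨sM, hsM, hhM⟩ := hgM M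
  obtain ⟨R0, hR0⟩ : ∃ R0, R0 = sM * σ / ε := ⟨_, rfl⟩
  have hR00 : 0 < R0 := by rw [hR0]; positivity
  obtain ⟨H, hH⟩ : ∃ H, ∀ s ∈ Icc 0 R0, g s ≤ H := by
    obtain ⟨H, hH⟩ := isCompact_Icc.exists_bound_of_continuousOn (s := Icc 0 R0) hgc.continuousOn
    exact ⟨H, fun s hs => (le_abs_self _).trans (hH s hs)⟩
  have hH0 : 0 ≤ H := (hg0 0).trans (hH 0 ⟨le_rfl, hR00.le⟩)
  obtain ⟨R, hR⟩ : ∃ R, R = max R0 (max (5 * r) sM) := ⟨_, rfl⟩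
  have hR1 : R0 ≤ R := by rw [hR]; exact le_max_left _ _
  have hR2 : 5 * r ≤ R := by rw [hR]; exact (le_max_left _ _).trans (le_max_right _ _)
  have hR3 : sM ≤ R := by rw [hR]; exact (le_max_right _ _).trans (le_max_right _ _)
  obtain ⟨Lg, hLg0, hLg⟩ := hgL R
  obtain ⟨C, hC⟩ : ∃ C, C = R0 / σ + H * (∫ t in (0:ℝ)..σ, p t) := ⟨_, rfl⟩
  have hC0 : 0 < C := by rw [hC]; positivity
  obtain ⟨C2, hC2⟩ : ∃ C2, C2 = C + Γ * Ap := ⟨_, rfl⟩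
  have hC20 : 0 < C2 := by rw [hC2]; positivity
  obtain ⟨d, hd⟩ : ∃ d, d = min (T - σ) (r / (4 * C2)) := ⟨_, rfl⟩
  have hd0 : 0 < d := by rw [hd]; exact lt_min (by linarith) (by positivity)
  have hd1 : d ≤ T - σ := by rw [hd]; exact min_le_left _ _
  have hd2 : C2 * d ≤ r / 4 := by
    have : C2 * d ≤ C2 * (r / (4 * C2)) :=
      mul_le_mul_of_nonneg_left (by rw [hd]; exact min_le_right _ _) hC20.le
    refine this.trans (le_of_eq ?_)
    field_simp
  obtain ⟨γ, hγ0, hγ⟩ : ∃ γ > 0, ∀ s ∈ Icc (r / 4) r, γ ≤ g s := by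
    obtain ⟨x, hx, h1⟩ := isCompact_Icc.exists_isMinOn (s := Icc (r / 4) r)
      ⟨r, by linarith, le_rfl⟩ hgc.continuousOn
    exact ⟨g x, hgpos x (by linarith [hx.1]), fun s hs => h1 hs⟩
  obtain ⟨Q, hQ⟩ : ∃ Q, Q = 2 * r / d + C + 2 * B + 1 := ⟨_, rfl⟩
  have hrd : 0 < 2 * r / d := by positivity
  have hQ0 : 0 < Q := by rw [hQ]; positivity
  have hQd : r ≤ Q * (d / 2) := by
    have h1 : 2 * r / d * (d / 2) = r := by field_simp
    have h2 : 2 * r / d * (d / 2) ≤ Q * (d / 2) :=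
      mul_le_mul_of_nonneg_right (by linarith) (by linarith)
    linarith
  obtain ⟨N1, hN1⟩ : ∃ N, N = ∫ t in σ..(σ + d / 2), n t := ⟨_, rfl⟩
  obtain ⟨N2, hN2⟩ : ∃ N, N = ∫ t in (-(d / 2))..0, n t := ⟨_, rfl⟩
  have hN10 : 0 < N1 := by rw [hN1]; exact hn1 _ (by positivity)
  have hN20 : 0 < N2 := by rw [hN2]; exact hn2 _ (by positivity)
  obtain ⟨S, hS⟩ : ∃ S, S = |lam| + (Q + C2) / N1 + (Q + C2) / N2 := ⟨_, rfl⟩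
  have hS1 : 0 < (Q + C2) / N1 := by positivity
  have hS2 : 0 < (Q + C2) / N2 := by positivity
  have hS0 : 0 < S := by rw [hS]; positivity
  refine ⟨S / γ, by positivity, fun μ hμ k hk => ?_⟩
  have hμ0 : 0 < μ := lt_trans (by positivity) hμ
  have hμγ : S < μ * γ := (div_lt_iff₀ hγ0).1 hμ
  have hk1 : (1:ℝ) ≤ k := by exact_mod_cast hk
  have hTK : T ≤ k * T := le_mul_of_one_le_left hT.le hk1
  have hβK : β (k * T) = β 0 := by simpa using (hβp.nat_mul k) 0
  obtain ⟨u, v, hu⟩ := core_exists (K := k * T) (p := p) (n := n) (g := g) (β := β) (β' := β')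
    (Y := C + 1 + 4 * r / σ) (μ := μ) (H := H) (Q := Q) hσ hd0 (by linarith) hpi hni hp0 hn0 hnσ
    hgc hgneg hg0 hLg0 hLg hr0 hΓ0.le hΓ hR2 hΓP hdβ hβ' hβB hβB' hBr hβr hβr' hβK hμ0.le hγ0.le hγ
    (by linarith [le_abs_self lam]) hM hsM hhM hε hεσ (by rw [← hAd]; exact hMA) hR0 hH hR1 hR3 hC
    (by have : 0 < 4 * r / σ := by positivity
        linarith)
    (by linarith) (C2 := C2)
    (by
      have := monoP σ (σ + d) 0 T hσ.le (by linarith) (by linarith)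
      rw [← hAp] at this
      have := mul_le_mul_of_nonneg_left this hΓ0.le
      linarith)
    (by
      rw [per_shift_int hpp]
      have h1 := monoP (-d) 0 (-T) 0 (by linarith) (by linarith) le_rfl
      have h2 := hpp.intervalIntegral_add_eq (-T) 0
      rw [neg_add_cancel, zero_add, ← hAp] at h2
      rw [h2] at h1
      have := mul_le_mul_of_nonneg_left h1 hΓ0.le
      linarith)
    hC20.le hd2
    (by
      rw [← hN1]
      have h1 : (Q + C2) / N1 ≤ μ * γ := by linarith [abs_nonneg lam]
      exact (div_le_iff₀ hN10).1 h1)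
    (by
      rw [per_shift_int hnp, ← hN2]
      have h1 : (Q + C2) / N2 ≤ μ * γ := by linarith [abs_nonneg lam]
      exact (div_le_iff₀ hN20).1 h1)
    hQd (by linarith) (by linarith)
  exact ⟨β, u, v, hβp, fun t => by linarith [hβr' t], hu⟩


lemma pos_of_nonneg {U V q g : ℝ → ℝ} {L : ℝ} (hU : ∀ t, HasDerivAt U (V t) t)
    (hq : ∀ a b, IntervalIntegrable q volume a b) (hgc : Continuous g)
    (hV : ∀ a b, V b - V a = -∫ t in a..b, q t * g (U t)) (hL : 0 ≤ L)
    (hg : ∀ t, |g (U t)| ≤ L * U t) (h0 : ∀ t, 0 ≤ U t) (hne : ∃ t, 0 < U t) : ∀ t, 0 < U t := by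
  have hUc : Continuous U := continuous_iff_continuousAt.2 fun t => (hU t).continuousAt
  by_contra hcon
  push Not at hcon
  obtain ⟨t1, ht1⟩ := hcon
  have hcl : IsClosed {t | U t = 0} := isClosed_eq hUc continuous_const
  have hop : IsOpen {t | U t = 0} := by
    rw [Metric.isOpen_iff]
    intro t0 ht0
    have ht0 : U t0 = 0 := ht0
    have hV0 : V t0 = 0 := by
      have hm : IsLocalMin U t0 := Eventually.of_forall fun t => by rw [ht0]; exact h0 t
      exact hm.hasDerivAt_eq_zero (hU t0)
    have hqa : ∀ a b, IntervalIntegrable (fun t => |q t|) volume a b := fun a b => (hq a b).abs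
    have hc : Continuous fun d : ℝ => ∫ t in (t0 - d)..(t0 + d), |q t| := by
      have h1 : Continuous fun x : ℝ => ∫ t in (0:ℝ)..x, |q t| :=
        intervalIntegral.continuous_primitive hqa 0
      have e : (fun d : ℝ => ∫ t in (t0 - d)..(t0 + d), |q t|) =
          fun d => (∫ t in (0:ℝ)..(t0 + d), |q t|) - ∫ t in (0:ℝ)..(t0 - d), |q t| := by
        funext e
        rw [intervalIntegral.integral_interval_sub_left (hqa _ _) (hqa _ _)]
      rw [e]
      exact (h1.comp (continuous_const.add continuous_id)).sub
        (h1.comp (continuous_const.sub continuous_id))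
    have h2 : ∀ᶠ d in nhds (0:ℝ), L * ∫ t in (t0 - d)..(t0 + d), |q t| < 1 / 2 :=
      (hc.const_mul L).continuousAt.eventually (gt_mem_nhds (by simp))
    obtain ⟨e, he, h3⟩ := Metric.eventually_nhds_iff.1 h2
    obtain ⟨d, hd⟩ : ∃ d, d = min (e / 2) 1 := ⟨_, rfl⟩
    have hd0 : 0 < d := by rw [hd]; positivity
    have hd1 : d ≤ 1 := by rw [hd]; exact min_le_right _ _
    have hI : L * ∫ t in (t0 - d)..(t0 + d), |q t| < 1 / 2 := by
      apply h3
      rw [Real.dist_eq, sub_zero, abs_of_pos hd0]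
      have : d ≤ e / 2 := by rw [hd]; exact min_le_left _ _
      linarith
    obtain ⟨x, hx, hmax⟩ := isCompact_Icc.exists_isMaxOn (s := Icc (t0 - d) (t0 + d))
      ⟨t0, by linarith, by linarith⟩ hUc.continuousOn
    have hmax : ∀ t ∈ Icc (t0 - d) (t0 + d), U t ≤ U x := fun t ht => hmax ht
    have hVb : ∀ t ∈ Icc (t0 - d) (t0 + d), |V t| ≤ U x / 2 := by
      intro t ht
      have e1 := hV t0 t
      rw [hV0, sub_zero] at e1
      rw [e1, abs_neg]
      have hsub : uIoc t0 t ⊆ Ioc (t0 - d) (t0 + d) := by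
        intro s hs
        rw [mem_uIoc] at hs
        rcases hs with hs | hs
        · exact ⟨by linarith [hs.1], hs.2.trans ht.2⟩
        · exact ⟨lt_of_le_of_lt ht.1 hs.1, by linarith [hs.2]⟩
      have e2 : |∫ s in t0..t, q s * g (U s)| ≤ ∫ s in uIoc t0 t, |q s| * (L * U x) := by
        have a1 := intervalIntegral.norm_integral_le_integral_norm_uIoc (a := t0) (b := t)
          (f := fun s => q s * g (U s)) (μ := volume)
        rw [Real.norm_eq_abs] at a1
        refine a1.trans ?_
        refine setIntegral_mono_on ?_ ?_ measurableSet_uIoc ?_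
        · exact (intervalIntegrable_iff.1 ((hq t0 t).mul_continuousOn
            (hgc.comp hUc).continuousOn)).norm
        · exact intervalIntegrable_iff.1 ((hqa t0 t).mul_const _)
        · intro s hs
          rw [Real.norm_eq_abs, abs_mul]
          refine mul_le_mul_of_nonneg_left ((hg s).trans ?_) (abs_nonneg _)
          exact mul_le_mul_of_nonneg_left (hmax s (Ioc_subset_Icc_self (hsub hs))) hL
      have e3 : ∫ s in uIoc t0 t, |q s| * (L * U x) ≤
          ∫ s in Ioc (t0 - d) (t0 + d), |q s| * (L * U x) := by
        refine setIntegral_mono_set ?_ ?_ (Eventually.of_forall hsub)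
        · exact (intervalIntegrable_iff_integrableOn_Ioc_of_le (by linarith)).1
            ((hqa _ _).mul_const _)
        · exact Eventually.of_forall fun s => mul_nonneg (abs_nonneg _) (mul_nonneg hL (h0 x))
      rw [← intervalIntegral.integral_of_le (by linarith), intervalIntegral.integral_mul_const] at e3
      have e4 := mul_le_mul_of_nonneg_right hI.le (h0 x)
      linarith
    have hx0 : U x ≤ 0 := by
      have : U x ≤ U x / 2 * d := by
        rcases le_total t0 x with h | h
        · have := mvt_le hU h (c := U x / 2) fun s hs =>
            (abs_le.1 (hVb s ⟨by linarith [hs.1], hs.2.trans hx.2⟩)).2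
          have h5 := mul_le_mul_of_nonneg_left (show x - t0 ≤ d by linarith [hx.2])
            (show 0 ≤ U x / 2 by linarith [h0 x])
          linarith
        · have := mvt_ge hU h (c := -(U x / 2)) fun s hs =>
            (abs_le.1 (hVb s ⟨hx.1.trans hs.1, by linarith [hs.2]⟩)).1
          have h5 := mul_le_mul_of_nonneg_left (show t0 - x ≤ d by linarith [hx.1])
            (show 0 ≤ U x / 2 by linarith [h0 x])
          linarith
      have h6 : U x / 2 * d ≤ U x / 2 * 1 := mul_le_mul_of_nonneg_left hd1 (by linarith [h0 x])
      linarith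
    refine ⟨d, hd0, fun t ht => ?_⟩
    rw [Metric.mem_ball, Real.dist_eq, abs_lt] at ht
    exact le_antisymm ((hmax t ⟨by linarith, by linarith⟩).trans hx0) (h0 t)
  have := IsClopen.eq_univ ⟨hcl, hop⟩ ⟨t1, le_antisymm ht1 (h0 t1)⟩
  obtain ⟨t2, ht2⟩ := hne
  have h7 : t2 ∈ {t | U t = 0} := by rw [this]; trivial
  have : U t2 = 0 := h7
  linarith

lemma periodic_ext {u v q g : ℝ → ℝ} {K : ℝ} (hK : 0 < K) (hu : ∀ t, HasDerivAt u (v t) t)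
    (hq : ∀ a b, IntervalIntegrable q volume a b) (hqp : Function.Periodic q K)
    (hgc : Continuous g) (huK : u K = u 0) (hvK : v K = v 0)
    (hv : ∀ t ∈ Icc 0 K, v t = v 0 - ∫ s in (0:ℝ)..t, q s * g (u s)) :
    ∃ U V : ℝ → ℝ, Function.Periodic U K ∧ (∀ t ∈ Icc 0 K, U t = u t) ∧
      (∀ t, HasDerivAt U (V t) t) ∧ ∀ a b, V b - V a = -∫ s in a..b, q s * g (U s) := by
  have huc : Continuous u := continuous_iff_continuousAt.2 fun t => (hu t).continuousAt
  let fr : ℝ → ℝ := toIcoMod hK 0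
  have hfr : Function.Periodic fr K := fun t => toIcoMod_add_right hK 0 t
  have hfr1 : ∀ t ∈ Ico 0 K, fr t = t := fun t ht => by
    simp only [fr]; rw [toIcoMod_eq_self]; simpa using ht
  let w : ℝ → ℝ := fun s => q s * g (u (fr s))
  have hwp : Function.Periodic w K := fun t => by simp only [w]; rw [hqp, hfr]
  have hw1 : ∀ t ∈ Ico 0 K, w t = q t * g (u t) := fun t ht => by simp only [w]; rw [hfr1 t ht]
  have hqg : ∀ a b, IntervalIntegrable (fun s => q s * g (u s)) volume a b := fun a b =>
    (hq a b).mul_continuousOn (hgc.comp huc).continuousOn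
  have hae : ∀ᵐ s : ℝ, s ≠ K := by simp [ae_iff]
  have hweq : ∀ t ∈ Icc 0 K, ∀ᵐ s : ℝ, s ∈ uIoc 0 t → q s * g (u s) = w s := by
    intro t ht
    filter_upwards [hae] with s hs hst
    rw [uIoc_of_le ht.1] at hst
    exact (hw1 s ⟨hst.1.le, lt_of_le_of_ne (hst.2.trans ht.2) hs⟩).symm
  have hw2 : ∀ t ∈ Icc 0 K, ∫ s in (0:ℝ)..t, w s = ∫ s in (0:ℝ)..t, q s * g (u s) := fun t ht =>
    (intervalIntegral.integral_congr_ae (hweq t ht)).symm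
  have hwi : ∀ a b, IntervalIntegrable w volume a b := by
    intro a b
    apply hwp.intervalIntegrable hK.ne' (t := 0)
    rw [zero_add]
    refine (hqg 0 K).congr_ae ?_
    exact (ae_restrict_iff' measurableSet_uIoc).2 (hweq K ⟨hK.le, le_rfl⟩)
  have hKm : K ∈ Icc 0 K := ⟨hK.le, le_rfl⟩
  have hw0 : ∫ s in (0:ℝ)..K, w s = 0 := by rw [hw2 K hKm]; linarith [hv K hKm]
  have hφp := per_primitive hwp hwi hw0
  have hφc : Continuous fun t => ∫ s in (0:ℝ)..t, w s := intervalIntegral.continuous_primitive hwi 0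
  let V : ℝ → ℝ := fun t => v 0 - ∫ s in (0:ℝ)..t, w s
  have hVc : Continuous V := continuous_const.sub hφc
  have hVp : Function.Periodic V K := fun t => by
    have := hφp t
    simp only [V] at this ⊢
    rw [this]
  have hVv : ∀ t ∈ Icc 0 K, V t = v t := fun t ht => by rw [hv t ht, ← hw2 t ht]
  have hVi : ∀ a b, IntervalIntegrable V volume a b := fun a b => hVc.intervalIntegrable _ _
  have hVint : ∀ t ∈ Icc 0 K, ∫ s in (0:ℝ)..t, V s = u t - u 0 := by
    intro t ht
    apply intervalIntegral.integral_eq_sub_of_hasDerivAt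
    · intro x hx
      rw [uIcc_of_le ht.1] at hx
      rw [hVv x ⟨hx.1, hx.2.trans ht.2⟩]
      exact hu x
    · exact hVi _ _
  have hψp := per_primitive hVp hVi (by rw [hVint K hKm]; linarith)
  let U : ℝ → ℝ := fun t => u 0 + ∫ s in (0:ℝ)..t, V s
  have hUp : Function.Periodic U K := fun t => by
    have := hψp t
    simp only [U] at this ⊢
    rw [this]
  have hUu : ∀ t ∈ Icc 0 K, U t = u t := fun t ht => by
    simp only [U]; rw [hVint t ht]; ring
  have hUfr : ∀ t, U t = u (fr t) := by
    intro t
    have h1 : fr t ∈ Ico 0 K := by simpa using toIcoMod_mem_Ico hK 0 t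
    rw [← hUu _ ⟨h1.1, h1.2.le⟩]
    have h2 : fr t = t - toIcoDiv hK 0 t • K := rfl
    rw [h2, hUp.sub_zsmul_eq]
  refine ⟨U, V, hUp, hUu, fun t => ?_, fun a b => ?_⟩
  · exact (intervalIntegral.integral_hasDerivAt_right (hVi 0 t) (hVc.stronglyMeasurableAtFilter _ _)
      hVc.continuousAt).const_add _
  · have h1 := intervalIntegral.integral_add_adjacent_intervals (hwi 0 a) (hwi a b)
    have h2 : ∫ s in a..b, q s * g (U s) = ∫ s in a..b, w s := by
      apply intervalIntegral.integral_congr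
      intro s _
      simp only [w]; rw [hUfr]
    simp only [V]
    linarith


theorem sub_main {p n g : ℝ → ℝ} {T σ : ℝ} (hσ : 0 < σ) (hσT : σ < T)
    (hpi : ∀ a b, IntervalIntegrable p volume a b) (hni : ∀ a b, IntervalIntegrable n volume a b)
    (hp0 : ∀ t, 0 ≤ p t) (hn0 : ∀ t, 0 ≤ n t) (hpp : Function.Periodic p T)
    (hnp : Function.Periodic n T) (hnσ : ∀ᵐ t, t ∈ Icc 0 σ → n t = 0)
    (hpσ : 0 < ∫ t in (0:ℝ)..σ, p t) (hn1 : ∀ d > 0, 0 < ∫ t in σ..(σ + d), n t)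
    (hn2 : ∀ d > 0, 0 < ∫ t in (-d)..0, n t)
    (hgc : Continuous g) (hgneg : ∀ s ≤ 0, g s = 0) (hgpos : ∀ s, 0 < s → 0 < g s)
    (hgL : ∀ R, ∃ L, 0 ≤ L ∧ ∀ a b, a ≤ R → b ≤ R → |g a - g b| ≤ L * |a - b|)
    (hgs : ∀ e > 0, ∃ r > 0, ∀ s, 0 ≤ s → s ≤ r → g s ≤ e * s)
    (hgM : ∀ M, ∃ s0 > 0, ∀ s, s0 ≤ s → M * s ≤ g s) :
    ∃ μs : ℝ, 0 < μs ∧ ∀ μ, μs < μ → ∀ k : ℕ, 2 ≤ k → ∃ U V : ℝ → ℝ,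
      (∀ t, HasDerivAt U (V t) t) ∧ (∀ a b, V b - V a = -∫ s in a..b, (p s - μ * n s) * g (U s)) ∧
      (∀ t, 0 < U t) ∧ Function.Periodic U (k * T) ∧
      ∀ l : ℕ, 1 ≤ l → l < k → ¬ Function.Periodic U (l * T) := by
  obtain ⟨μs, hμs, H⟩ := core_main hσ hσT hpi hni hp0 hn0 hpp hnp hnσ hpσ hn1 hn2 hgc hgneg hgpos
    hgL hgs hgM
  refine ⟨μs, hμs, fun μ hμ k hk => ?_⟩
  obtain ⟨β, u, v, hβp, hβ0, hu, huK, hvK, hv, hu0, huβ, t1, ht1, hut1⟩ := H μ hμ k (by omega)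
  have hT : 0 < T := hσ.trans hσT
  have hk1 : (2:ℝ) ≤ k := by exact_mod_cast hk
  have hK : 0 < k * T := by positivity
  have hTK : T ≤ k * T := le_mul_of_one_le_left hT.le (by linarith)
  have hqi : ∀ a b, IntervalIntegrable (fun s => p s - μ * n s) volume a b := fun a b =>
    (hpi a b).sub ((hni a b).const_mul μ)
  have hqp : Function.Periodic (fun s => p s - μ * n s) (k * T) := fun t => by
    have h1 := (hpp.nat_mul k) t
    have h2 := (hnp.nat_mul k) t
    simp only
    rw [h1, h2]
  obtain ⟨U, V, hUp, hUu, hUd, hV⟩ := periodic_ext hK hu hqi hqp hgc huK hvK hv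
  have hUc : Continuous U := continuous_iff_continuousAt.2 fun t => (hUd t).continuousAt
  have hU0 : ∀ t, 0 ≤ U t := fun t => by
    obtain ⟨y, hy, e⟩ := hUp.exists_mem_Ico₀ hK t
    rw [e, hUu y ⟨hy.1, hy.2.le⟩]
    exact hu0 y ⟨hy.1, hy.2.le⟩
  obtain ⟨R, hR⟩ : ∃ R, ∀ t, U t ≤ R := by
    obtain ⟨R, hR⟩ := isCompact_Icc.exists_bound_of_continuousOn (s := Icc 0 (k * T)) hUc.continuousOn
    refine ⟨R, fun t => ?_⟩
    obtain ⟨y, hy, e⟩ := hUp.exists_mem_Ico₀ hK t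
    rw [e]
    exact (le_abs_self _).trans (hR y ⟨hy.1, hy.2.le⟩)
  obtain ⟨L, hL0, hL⟩ := hgL R
  have hgU : ∀ t, |g (U t)| ≤ L * U t := fun t => by
    have := hL (U t) 0 (hR t) ((hU0 t).trans (hR t))
    rwa [hgneg 0 le_rfl, sub_zero, sub_zero, abs_of_nonneg (hU0 t)] at this
  have ht1K : t1 ∈ Icc 0 (k * T) := ⟨ht1.1, by linarith [ht1.2]⟩
  have hpos : ∀ t, 0 < U t := pos_of_nonneg hUd hqi hgc hV hL0 hgU hU0
    ⟨t1, by rw [hUu t1 ht1K]; linarith [hβ0 t1]⟩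
  refine ⟨U, V, hUd, hV, hpos, hUp, fun l hl hlk hper => ?_⟩
  have hl1 : (1:ℝ) ≤ l := by exact_mod_cast hl
  have hl2 : (l:ℝ) + 1 ≤ k := by exact_mod_cast hlk
  have h1 : T ≤ l * T := le_mul_of_one_le_left hT.le hl1
  have h2 : (l + 1) * T ≤ k * T := mul_le_mul_of_nonneg_right hl2 hT.le
  have hm1 : t1 + l * T ∈ Icc σ (k * T) := ⟨by linarith [ht1.1], by linarith [ht1.2]⟩
  have h3 := huβ _ hm1
  rw [← hUu _ ⟨by linarith [hm1.1], hm1.2⟩, hper t1, hUu t1 ht1K, (hβp.nat_mul l) t1] at h3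
  linarith

lemma ghat_facts {g : ℝ → ℝ} (hgC1 : ContDiffOn ℝ 1 g (Set.Ici 0))
    (hg0 : g 0 = 0) (hgpos : ∀ s : ℝ, 0 < s → 0 < g s)
    (hg'0 : derivWithin g (Set.Ici 0) 0 = 0)
    (hgsup : Filter.Tendsto (fun s => g s / s) Filter.atTop Filter.atTop) :
    ∃ h : ℝ → ℝ, (∀ s, 0 ≤ s → h s = g s) ∧ Continuous h ∧ (∀ s ≤ 0, h s = 0) ∧
    (∀ s, 0 < s → 0 < h s) ∧
    (∀ R, ∃ L, 0 ≤ L ∧ ∀ a b, a ≤ R → b ≤ R → |h a - h b| ≤ L * |a - b|) ∧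
    (∀ e > 0, ∃ r > 0, ∀ s, 0 ≤ s → s ≤ r → h s ≤ e * s) ∧
    (∀ M, ∃ s0 > 0, ∀ s, s0 ≤ s → M * s ≤ h s) := by
  have hh : ∀ s, 0 ≤ s → g (max s 0) = g s := fun s hs => by rw [max_eq_left hs]
  refine ⟨fun s => g (max s 0), hh, ?_, ?_, ?_, ?_, ?_, ?_⟩
  · exact hgC1.continuousOn.comp_continuous (by fun_prop) fun s =>
      mem_Ici.2 (le_max_right _ _)
  · intro s hs
    simp only
    rw [max_eq_right hs, hg0]
  · intro s hs
    simp only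
    rw [hh s hs.le]; exact hgpos s hs
  · intro R
    obtain ⟨L, hL⟩ := (hgC1.mono (show Icc (0:ℝ) (max R 0) ⊆ Ici 0 from fun x hx => hx.1)).exists_lipschitzOnWith
      one_ne_zero (convex_Icc _ _) isCompact_Icc
    refine ⟨L, L.2, fun a b ha hb => ?_⟩
    have := hL.dist_le_mul (max a 0) ⟨le_max_right _ _, max_le_max_right _ ha⟩
      (max b 0) ⟨le_max_right _ _, max_le_max_right _ hb⟩
    rw [Real.dist_eq, Real.dist_eq] at this
    exact this.trans (mul_le_mul_of_nonneg_left (abs_max_sub_max_le' _ _ _) L.2)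
  · intro e he
    have hd : DifferentiableWithinAt ℝ g (Ici 0) 0 :=
      (hgC1.differentiableOn one_ne_zero) 0 self_mem_Ici
    have h1 := hd.hasDerivWithinAt
    rw [hg'0, hasDerivWithinAt_iff_isLittleO] at h1
    have h2 := h1.def he
    obtain ⟨r, hr, h3⟩ := Metric.mem_nhdsWithin_iff.1 h2
    refine ⟨r / 2, by positivity, fun s hs hsr => ?_⟩
    have h4 : s ∈ Metric.ball (0:ℝ) r ∩ Ici 0 := by
      refine ⟨?_, hs⟩
      rw [Metric.mem_ball, Real.dist_eq, sub_zero, abs_of_nonneg hs]; linarith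
    have h5 := h3 h4
    simp only [mem_ofPred_eq, hg0, sub_zero, smul_zero, Real.norm_eq_abs, abs_of_nonneg hs] at h5
    simp only
    rw [hh s hs]
    exact (le_abs_self _).trans h5
  · intro M
    obtain ⟨s0, hs0⟩ := (hgsup.eventually_ge_atTop M).exists_forall_of_atTop
    refine ⟨max s0 1, by positivity, fun s hs => ?_⟩
    have hs1 : 0 < s := lt_of_lt_of_le (by positivity) hs
    have := hs0 s ((le_max_left _ _).trans hs)
    simp only
    rw [hh s hs1.le]
    exact (le_div_iff₀ hs1).1 this

lemma locint_interval {f : ℝ → ℝ} (h : LocallyIntegrable f volume) (a b : ℝ) :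
    IntervalIntegrable f volume a b :=
  (h.integrableOn_isCompact isCompact_uIcc).intervalIntegrable

lemma locint_pos {f : ℝ → ℝ} (h : LocallyIntegrable f volume) :
    LocallyIntegrable (fun t => max (f t) 0) volume := by
  rw [locallyIntegrable_iff] at h ⊢
  intro k hk
  exact Integrable.pos_part (h k hk)

lemma posOn_int {q : ℝ → ℝ} {x y : ℝ} (hxy : x ≤ y) (hq : LocallyIntegrable q volume)
    (h : PosOn q (Icc x y)) : 0 < (∫ t in x..y, max (q t) 0) ∧ ∫ t in x..y, max (-q t) 0 = 0 := by
  obtain ⟨h1, h2⟩ := h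
  have hIoc : volume.restrict (Icc x y) = volume.restrict (Ioc x y) :=
    Measure.restrict_congr_set Ioc_ae_eq_Icc.symm
  rw [hIoc] at h1 h2
  have hi := locint_interval (locint_pos hq) x y
  have hi' : IntervalIntegrable (fun t => max (-q t) 0) volume x y :=
    locint_interval (locint_pos hq.neg) x y
  have hn : 0 ≤ ∫ t in x..y, max (q t) 0 :=
    intervalIntegral.integral_nonneg hxy fun t _ => le_max_right _ _
  constructor
  · refine lt_of_le_of_ne hn fun h0 => h2 ?_
    have := (intervalIntegral.integral_eq_zero_iff_of_le_of_nonneg_ae hxy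
      (Eventually.of_forall fun t => le_max_right _ _) hi).1 h0.symm
    filter_upwards [this, h1] with t ht1 ht2
    have ht3 : max (q t) 0 = 0 := ht1
    rwa [max_eq_left ht2] at ht3
  · refine (intervalIntegral.integral_eq_zero_iff_of_le_of_nonneg_ae hxy
      (Eventually.of_forall fun t => le_max_right _ _) hi').2 ?_
    filter_upwards [h1] with t ht
    exact max_eq_right (neg_nonpos.2 ht)

lemma reduction {T : ℝ} (hT : 0 < T) {a : ℝ → ℝ} (haper : Function.Periodic a T)
    (haloc : LocallyIntegrable a volume) {m : ℕ} (hm : 1 ≤ m) (hasign : SignCond a T m) :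
    ∃ τ σ : ℝ, 0 < σ ∧ σ < T ∧ (∀ᵐ t, t ∈ Icc 0 σ → max (-a (t + τ)) 0 = 0) ∧
      (0 < ∫ t in (0:ℝ)..σ, max (a (t + τ)) 0) ∧
      (∀ d > 0, 0 < ∫ t in σ..(σ + d), max (-a (t + τ)) 0) ∧
      (∀ d > 0, 0 < ∫ t in (-d)..0, max (-a (t + τ)) 0) := by
  obtain ⟨s, hs0, hsT, hsi, hpos, hneg⟩ := hasign
  have hp := hpos 0 hm
  have hn := hneg 0 hm
  simp only [mul_zero, zero_add] at hp hn
  rw [hs0] at hp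
  have h01 : 0 < s 1 := by have := hsi 0 (by omega); rwa [hs0] at this
  have h12 : s 1 < s 2 := hsi 1 (by omega)
  have h2T : s 2 ≤ T := by
    have : ∀ j, 2 + j ≤ 2 * m → s 2 ≤ s (2 + j) := by
      intro j
      induction j with
      | zero => intro _; exact le_rfl
      | succ j ih => intro hj; exact (ih (by omega)).trans (hsi (2 + j) (by omega)).le
    have h := this (2 * m - 2) (by omega)
    rwa [show 2 + (2 * m - 2) = 2 * m by omega, hsT] at h
  obtain ⟨n, hnd⟩ : ∃ n : ℝ → ℝ, n = fun t => max (-a t) 0 := ⟨_, rfl⟩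
  obtain ⟨p, hpd⟩ : ∃ p : ℝ → ℝ, p = fun t => max (a t) 0 := ⟨_, rfl⟩
  have hni : ∀ a b, IntervalIntegrable n volume a b := by
    rw [hnd]; exact locint_interval (locint_pos haloc.neg)
  have hpi : ∀ a b, IntervalIntegrable p volume a b := by
    rw [hpd]; exact locint_interval (locint_pos haloc)
  have hn0 : ∀ t, 0 ≤ n t := fun t => by rw [hnd]; exact le_max_right _ _
  have hp0 : ∀ t, 0 ≤ p t := fun t => by rw [hpd]; exact le_max_right _ _
  have hnp : Function.Periodic n T := fun t => by simp only [hnd]; rw [haper]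
  have monoN : ∀ a b c d, c ≤ a → a ≤ b → b ≤ d → ∫ t in a..b, n t ≤ ∫ t in c..d, n t :=
    fun a b c d h1 h2 h3 => intervalIntegral.integral_mono_interval h1 h2 h3
      (Eventually.of_forall hn0) (hni _ _)
  have i1 : 0 < ∫ t in (0:ℝ)..(s 1), p t := by rw [hpd]; exact (posOn_int h01.le haloc hp).1
  have i2 : ∫ t in (0:ℝ)..(s 1), n t = 0 := by rw [hnd]; exact (posOn_int h01.le haloc hp).2
  have i3 : 0 < ∫ t in (s 1)..(s 2), n t := by
    rw [hnd]; exact (posOn_int h12.le haloc.neg hn).1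
  obtain ⟨F, hF⟩ : ∃ F : ℝ → ℝ, F = fun t => ∫ x in (s 1)..t, n x := ⟨_, rfl⟩
  have hFc : Continuous F := by rw [hF]; exact intervalIntegral.continuous_primitive hni _
  have hFsub : ∀ a b, ∫ x in a..b, n x = F b - F a := fun a b => by
    rw [hF]; exact (intervalIntegral.integral_interval_sub_left (hni _ _) (hni _ _)).symm
  have hFmono : ∀ a b, a ≤ b → F a ≤ F b := fun a b hab => by
    have := intervalIntegral.integral_nonneg (μ := volume) hab (fun t _ => hn0 t)
    rw [hFsub] at this; linarith
  have hF1 : F (s 1) = 0 := by rw [hF]; simp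
  have hFT : 0 < F T := by
    have h := hFmono _ _ h2T
    rw [hFsub, hF1] at i3
    linarith
  have h1T : s 1 < T := by linarith
  obtain ⟨τ1, ⟨hτ1, hτ1F⟩, hτ1m⟩ := IsCompact.exists_isGreatest
    (s := Icc (s 1) T ∩ {t | F t = 0})
    (isCompact_Icc.inter_right (isClosed_eq hFc continuous_const)) ⟨s 1, ⟨le_rfl, h1T.le⟩, hF1⟩
  obtain ⟨τ2, ⟨hτ2, hτ2F⟩, hτ2m⟩ := IsCompact.exists_isLeast
    (s := Icc (s 1) T ∩ {t | F t = F T})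
    (isCompact_Icc.inter_right (isClosed_eq hFc continuous_const)) ⟨T, ⟨h1T.le, le_rfl⟩, rfl⟩
  have hτ1F : F τ1 = 0 := hτ1F
  have hτ2F : F τ2 = F T := hτ2F
  have h12' : τ1 < τ2 := by
    by_contra hc
    push Not at hc
    have := hFmono _ _ hc
    linarith
  have shiftn : ∀ x y : ℝ, ∫ t in x..y, n (t + (τ2 - T)) = ∫ t in (x + (τ2 - T))..(y + (τ2 - T)), n t :=
    fun x y => intervalIntegral.integral_comp_add_right n _
  have shiftp : ∀ x y : ℝ, ∫ t in x..y, p (t + (τ2 - T)) = ∫ t in (x + (τ2 - T))..(y + (τ2 - T)), p t :=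
    fun x y => intervalIntegral.integral_comp_add_right p _
  have perN : ∀ x y : ℝ, ∫ t in x..y, n t = ∫ t in (x + T)..(y + T), n t := fun x y => by
    rw [← intervalIntegral.integral_comp_add_right n T]
    exact intervalIntegral.integral_congr fun t _ => (hnp t).symm
  have en : ∀ t, max (-a (t + (τ2 - T))) 0 = n (t + (τ2 - T)) := fun t => by rw [hnd]
  have ep : ∀ t, max (a (t + (τ2 - T))) 0 = p (t + (τ2 - T)) := fun t => by rw [hpd]
  simp only [mem_Icc] at hτ1 hτ2
  refine ⟨τ2 - T, τ1 - (τ2 - T), by linarith, by linarith, ?_, ?_, ?_, ?_⟩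
  · simp only [en]
    have hz : ∫ t in (0:ℝ)..(τ1 - (τ2 - T)), n (t + (τ2 - T)) = 0 := by
      rw [shiftn, sub_add_cancel, zero_add,
        ← intervalIntegral.integral_add_adjacent_intervals (hni (τ2 - T) 0) (hni 0 τ1),
        ← intervalIntegral.integral_add_adjacent_intervals (hni 0 (s 1)) (hni (s 1) τ1), i2,
        perN (τ2 - T) 0, hFsub, hFsub, sub_add_cancel, zero_add, hτ2F, hτ1F, hF1]
      ring
    have hle : 0 ≤ τ1 - (τ2 - T) := by linarith
    have := (intervalIntegral.integral_eq_zero_iff_of_le_of_nonneg_ae hle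
      (Eventually.of_forall fun t => hn0 _)
      (by
        have := (hni (0 + (τ2 - T)) (τ1 - (τ2 - T) + (τ2 - T))).comp_add_right (τ2 - T)
        simpa using this)).1 hz
    rw [Measure.restrict_congr_set Ioc_ae_eq_Icc] at this
    exact (ae_restrict_iff' measurableSet_Icc).1 this
  · simp only [ep]
    rw [shiftp, sub_add_cancel, zero_add]
    exact lt_of_lt_of_le i1 (intervalIntegral.integral_mono_interval (by linarith) h01.le hτ1.1
      (Eventually.of_forall hp0) (hpi _ _))
  · intro d hd
    simp only [en]
    rw [shiftn, sub_add_cancel, show τ1 - (τ2 - T) + d + (τ2 - T) = τ1 + d by ring, hFsub, hτ1F]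
    have h1 : 0 < min d (T - τ1) := lt_min hd (by linarith)
    have h2 : F (τ1 + min d (T - τ1)) ≤ F (τ1 + d) :=
      hFmono _ _ (by linarith [min_le_left d (T - τ1)])
    have h3 : 0 ≤ F (τ1 + min d (T - τ1)) := by
      rw [← hτ1F]; exact hFmono _ _ (by linarith)
    have h4 : F (τ1 + min d (T - τ1)) ≠ 0 := fun h0 => by
      have := hτ1m ⟨⟨by linarith, by linarith [min_le_right d (T - τ1)]⟩, h0⟩
      linarith
    have := lt_of_le_of_ne h3 h4.symm
    linarith
  · intro d hd
    simp only [en]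
    rw [shiftn, zero_add, perN, sub_add_cancel, show -d + (τ2 - T) + T = τ2 - d by ring, hFsub, hτ2F]
    have h1 : 0 < min d (τ2 - s 1) := lt_min hd (by linarith)
    have h2 : F (τ2 - d) ≤ F (τ2 - min d (τ2 - s 1)) :=
      hFmono _ _ (by linarith [min_le_left d (τ2 - s 1)])
    have h3 : F (τ2 - min d (τ2 - s 1)) ≤ F T := by
      rw [← hτ2F]; exact hFmono _ _ (by linarith)
    have h4 : F (τ2 - min d (τ2 - s 1)) ≠ F T := fun h0 => by
      have := hτ2m ⟨⟨by linarith [min_le_right d (τ2 - s 1)], by linarith⟩, h0⟩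
      linarith
    have := lt_of_le_of_ne h3 h4
    linarith

/-- Theorem 1.2: for `μ` large, `u'' + (a⁺(t) - μ a⁻(t)) g(u) = 0` has a
positive subharmonic solution of every order `k ≥ 2`. -/
theorem stmt1 (T : ℝ) (hT : 0 < T) (a : ℝ → ℝ)
    (haper : Function.Periodic a T)
    (haloc : MeasureTheory.LocallyIntegrable a MeasureTheory.volume)
    (m : ℕ) (hm : 1 ≤ m) (hasign : SignCond a T m)
    (g : ℝ → ℝ) (hgC1 : ContDiffOn ℝ 1 g (Set.Ici 0))
    (hg0 : g 0 = 0) (hgpos : ∀ s : ℝ, 0 < s → 0 < g s)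
    (hg'0 : derivWithin g (Set.Ici 0) 0 = 0)
    (hgsup : Filter.Tendsto (fun s => g s / s) Filter.atTop Filter.atTop) :
    ∃ μstar : ℝ, 0 < μstar ∧ ∀ μ : ℝ, μstar < μ → ∀ k : ℕ, 2 ≤ k →
      ∃ u : ℝ → ℝ,
        IsSol (fun t s => (max (a t) 0 - μ * max (-a t) 0) * g s) u ∧
        (∀ t, 0 < u t) ∧ IsSubharmonic u T k := by
  obtain ⟨τ, σ, hσ, hσT, hnσ, hpσ, hn1, hn2⟩ := reduction hT haper haloc hm hasign
  obtain ⟨h, hhg, hhc, hhneg, hhpos, hhL, hhs, hhM⟩ := ghat_facts hgC1 hg0 hgpos hg'0 hgsup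
  have hpl := locint_pos haloc
  have hnl := locint_pos haloc.neg
  obtain ⟨μs, hμs, H⟩ := sub_main (p := fun t => max (a (t + τ)) 0) (n := fun t => max (-a (t + τ)) 0)
    hσ hσT
    (fun x y => by
      have := (locint_interval hpl (x + τ) (y + τ)).comp_add_right τ
      simpa using this)
    (fun x y => by
      have := (locint_interval hnl (x + τ) (y + τ)).comp_add_right τ
      simpa using this)
    (fun t => le_max_right _ _) (fun t => le_max_right _ _)
    (fun t => by simp only; rw [show t + T + τ = t + τ + T by ring, haper])
    (fun t => by simp only; rw [show t + T + τ = t + τ + T by ring, haper])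
    hnσ hpσ hn1 hn2 hhc hhneg hhpos hhL hhs hhM
  refine ⟨μs, hμs, fun μ hμ k hk => ?_⟩
  obtain ⟨U, V, hUd, hV, hUpos, hUp, hUnp⟩ := H μ hμ k hk
  have hUc : Continuous U := continuous_iff_continuousAt.2 fun t => (hUd t).continuousAt
  have heq : (fun t => (max (a t) 0 - μ * max (-a t) 0) * g (U (t - τ))) =
      fun t => (max (a t) 0 - μ * max (-a t) 0) * h (U (t - τ)) := by
    funext t
    rw [hhg _ (hUpos _).le]
  refine ⟨fun t => U (t - τ), ⟨fun t => V (t - τ), fun t => ?_, ?_, fun t => ?_⟩, fun t => hUpos _, ?_, ?_⟩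
  · exact (hUd (t - τ)).comp_sub_const t τ
  · simp only
    rw [heq]
    have hql : LocallyIntegrable (fun t => max (a t) 0 - μ * max (-a t) 0) volume :=
      hpl.sub (hnl.smul μ)
    exact LocallyIntegrable.smul_continuous (g := fun t => h (U (t - τ))) (by fun_prop) hql
  · simp only
    rw [heq]
    have h1 := hV (0 - τ) (t - τ)
    have h2 := intervalIntegral.integral_comp_add_right (a := 0 - τ) (b := t - τ)
      (fun t => (max (a t) 0 - μ * max (-a t) 0) * h (U (t - τ))) τ
    simp only [add_sub_cancel_right, sub_add_cancel] at h2
    rw [← h2]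
    linarith
  · intro t
    simp only
    rw [show t + k * T - τ = t - τ + k * T by ring, hUp]
  · intro l hl hlk hper
    apply hUnp l hl hlk
    intro t
    have := hper (t + τ)
    simp only at this
    rwa [show t + τ + l * T - τ = t + l * T by ring, add_sub_cancel_right] at this
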